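/- arXiv:1712.04907 — 3 statements merged into one kernel-verified Lean document; each statement's English description precedes it below -/
import Mathlib

section
/- Let R be a commutative ring and A a square-free discrete Hodge algebra over R with m_0(A) > 0. Then there exist square-free discrete Hodge algebras A_1 and A_2 over R with m_0(A_1) < m_0(A) and m_0(A_2) < m_0(A), and a Cartesian (pullback) square of commutative rings with maps i_1: A → A_1, i_2: A → A_2[x], j_1: A_1 → A_2, j_2: A_2[x] → A_2 satisfying j_1 ∘ i_1 = j_2 ∘ i_2, such that all four maps are surjective R-algebra homomorphisms and j_2 is evaluation at x = 0. -/
/-!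
Write `A ≅ R[x_1,…,x_n]/I` with `m = m₀(A)` minimal, and single out the variable `x = x_m`.  Let `P`
be the polynomial ring in the other variables, so that `R[x_1,…,x_n] = P[x]`.  Let `I₁ ⊆ P` be
generated by the generators of `I` not involving `x`, and let `I₂ ⊆ P` be generated by all the
generators of `I`, with `x` set to `1`.  As the generators are square-free,
`f ∈ I` if and only if `f(0) ∈ I₁` and all coefficients of `f` lie in `I₂` (`mem_dhaIdeal_iff`).
For any ideal with this description the square with `A₁ = P/I₁`, `A₂ = P/I₂` is Cartesian
(`cartesian_of_ker`).  Both `A₁` and `A₂` are presented with monomials in `m - 1` variables.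

It remains to see that `1` is not among the generators of `I₂`.  Otherwise `A₂ = 0`, so the
Cartesian square makes `i₁ : A → A₁` an isomorphism, whence `m₀(A) ≤ m - 1`, a contradiction.
-/


universe u

open MvPolynomial

/-- The discrete Hodge algebra `R[x_1,…,x_n]/I` associated to a finite set `S` of exponent
vectors: `I` is the ideal generated by the monomials `x^d`, `d ∈ S`. -/
abbrev DiscreteHodgeAlgebra (R : Type u) [CommRing R] (n : ℕ) (S : Finset (Fin n →₀ ℕ)) :
    Type u :=
  MvPolynomial (Fin n) R ⧸
    Ideal.span ((fun d => (MvPolynomial.monomial d (1 : R) : MvPolynomial (Fin n) R)) '' S)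

lemma aeval_zero_of_ne_zero {R : Type u} [CommRing R] {n : ℕ} {d : Fin n →₀ ℕ} (hd : d ≠ 0) :
    MvPolynomial.aeval (fun _ : Fin n => (0 : R)) (MvPolynomial.monomial d (1 : R)) = 0 := by
  obtain ⟨i, hi⟩ : ∃ i, d i ≠ 0 := by
    by_contra h
    push_neg at h
    exact hd (Finsupp.ext h)
  rw [MvPolynomial.aeval_monomial, map_one, one_mul, Finsupp.prod]
  exact Finset.prod_eq_zero (Finsupp.mem_support_iff.mpr hi) (zero_pow hi)

/-- Evaluation at `x_1 = ⋯ = x_n = 0`, as an `R`-algebra homomorphism from the discrete Hodge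
algebra to `R`; it is well defined because the generating monomials have positive degree. -/
noncomputable def dhaEval (R : Type u) [CommRing R] (n : ℕ) (S : Finset (Fin n →₀ ℕ))
    (hS : ∀ d ∈ S, d ≠ 0) : DiscreteHodgeAlgebra R n S →ₐ[R] R :=
  Ideal.Quotient.liftₐ _ (MvPolynomial.aeval (fun _ : Fin n => (0 : R)))
    (by
      intro a ha
      have : a ∈ RingHom.ker (MvPolynomial.aeval (fun _ : Fin n => (0 : R)) :
          MvPolynomial (Fin n) R →ₐ[R] R).toRingHom := by
        refine Ideal.span_le.mpr ?_ ha
        rintro - ⟨d, hd, rfl⟩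
        simpa [RingHom.mem_ker] using aeval_zero_of_ne_zero (hS d hd)
      simpa [RingHom.mem_ker] using this)

/-- `A` admits a presentation as a square-free discrete Hodge algebra over `R`,
`A ≅ (R[x_1,…,x_m]/I)[x_{m+1},…,x_n]`, in which the generating square-free monomials (all of
positive degree) involve only the first `m` variables. -/
def SqFreePresentation (R : Type u) [CommRing R] (A : Type u) [CommRing A] [Algebra R A]
    (m : ℕ) : Prop :=
  ∃ n : ℕ, m ≤ n ∧ ∃ S : Finset (Fin n →₀ ℕ),
    (∀ d ∈ S, d ≠ 0 ∧ (∀ i, d i ≤ 1) ∧ ∀ i : Fin n, d i ≠ 0 → (i : ℕ) < m) ∧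
    Nonempty (A ≃ₐ[R] DiscreteHodgeAlgebra R n S)

/-- `m₀(A)`: the minimal `m` such that `A ≅ (R[x_1,…,x_m]/I)[x_{m+1},…,x_n]` with `I` generated
by square-free monomials in `x_1,…,x_m`. -/
noncomputable def mZero (R : Type u) [CommRing R] (A : Type u) [CommRing A] [Algebra R A] : ℕ :=
  sInf {m | SqFreePresentation R A m}

/-! ### Cartesian squares from quotients of `P[X]` -/

/-- The Cartesian square attached to ideals `I₁ ≤ I₂` of `P` and a quotient `A` of `P[X]` whose
kernel consists of the polynomials with constant term in `I₁` and all coefficients in `I₂`. -/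
lemma cartesian_of_ker {R P A : Type*} [CommRing R] [CommRing P] [CommRing A] [Algebra R P]
    [Algebra R A] (I₁ I₂ : Ideal P) (h : I₁ ≤ I₂) (q : Polynomial P →ₐ[R] A)
    (hq : Function.Surjective q)
    (hker : ∀ f, q f = 0 ↔ f.coeff 0 ∈ I₁ ∧ ∀ n, f.coeff n ∈ I₂) :
    ∃ (i₁ : A →ₐ[R] P ⧸ I₁) (i₂ : A →ₐ[R] Polynomial (P ⧸ I₂)) (j₁ : (P ⧸ I₁) →ₐ[R] P ⧸ I₂),
      let j₂ : Polynomial (P ⧸ I₂) →ₐ[R] P ⧸ I₂ :=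
        (Polynomial.aeval (0 : P ⧸ I₂) : Polynomial (P ⧸ I₂) →ₐ[P ⧸ I₂] P ⧸ I₂).restrictScalars R
      Function.Surjective i₁ ∧ Function.Surjective i₂ ∧
      Function.Surjective j₁ ∧ Function.Surjective j₂ ∧
      j₁.comp i₁ = j₂.comp i₂ ∧
      ∀ (a₁ : P ⧸ I₁) (p : Polynomial (P ⧸ I₂)),
        j₁ a₁ = j₂ p → ∃! a : A, i₁ a = a₁ ∧ i₂ a = p := by
  let φ₁ : Polynomial P →ₐ[R] P ⧸ I₁ := (Ideal.Quotient.mkₐ R I₁).comp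
    ((Polynomial.aeval (0 : P) : Polynomial P →ₐ[P] P).restrictScalars R)
  let φ₂ : Polynomial P →ₐ[R] Polynomial (P ⧸ I₂) :=
    Polynomial.mapAlgHom (Ideal.Quotient.mkₐ R I₂)
  have hφ₁ : ∀ f, φ₁ f = Ideal.Quotient.mk I₁ (f.coeff 0) := by
    intro f
    simp [φ₁, Polynomial.coeff_zero_eq_aeval_zero]
  have hφ₂ : ∀ f, φ₂ f = f.map (Ideal.Quotient.mk I₂) := by
    intro f
    rfl
  have hj₂ : ∀ p : Polynomial (P ⧸ I₂),
      ((Polynomial.aeval (0 : P ⧸ I₂) :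
        Polynomial (P ⧸ I₂) →ₐ[P ⧸ I₂] P ⧸ I₂).restrictScalars R) p = p.coeff 0 := by
    intro p
    simp [Polynomial.coeff_zero_eq_aeval_zero]
  have hk : ∀ f, q f = 0 ↔ φ₁ f = 0 ∧ φ₂ f = 0 := by
    intro f
    rw [hker, hφ₁, hφ₂, Ideal.Quotient.eq_zero_iff_mem, Polynomial.ext_iff]
    simp [Polynomial.coeff_map, Ideal.Quotient.eq_zero_iff_mem]
  let i₁ : A →ₐ[R] P ⧸ I₁ := AlgHom.liftOfSurjective q hq φ₁ fun f hf => ((hk f).1 hf).1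
  let i₂ : A →ₐ[R] Polynomial (P ⧸ I₂) :=
    AlgHom.liftOfSurjective q hq φ₂ fun f hf => ((hk f).1 hf).2
  have hi₁ : ∀ f, i₁ (q f) = φ₁ f := fun f => AlgHom.liftOfSurjective_apply ..
  have hi₂ : ∀ f, i₂ (q f) = φ₂ f := fun f => AlgHom.liftOfSurjective_apply ..
  have hj₁ : ∀ b, Ideal.Quotient.factorₐ R h (Ideal.Quotient.mk I₁ b) = Ideal.Quotient.mk I₂ b :=
    fun b => rfl
  have sφ₂ : Function.Surjective φ₂ := Polynomial.map_surjective _ Ideal.Quotient.mk_surjective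
  refine ⟨i₁, i₂, Ideal.Quotient.factorₐ R h, ?_, ?_, ?_, ?_, ?_, ?_⟩
  · intro a
    obtain ⟨b, rfl⟩ := Ideal.Quotient.mk_surjective a
    exact ⟨q (Polynomial.C b), by rw [hi₁, hφ₁, Polynomial.coeff_C_zero]⟩
  · intro p
    obtain ⟨f, rfl⟩ := sφ₂ p
    exact ⟨q f, hi₂ f⟩
  · exact Ideal.Quotient.factor_surjective h
  · intro a
    exact ⟨Polynomial.C a, by rw [hj₂, Polynomial.coeff_C_zero]⟩
  · ext a
    obtain ⟨f, rfl⟩ := hq a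
    rw [AlgHom.comp_apply, AlgHom.comp_apply, hi₁, hi₂, hφ₁, hφ₂, hj₂, hj₁, Polynomial.coeff_map]
  · intro a₁ p hp
    obtain ⟨b, rfl⟩ := Ideal.Quotient.mk_surjective a₁
    obtain ⟨f, rfl⟩ := sφ₂ p
    rw [hj₁, hj₂, hφ₂, Polynomial.coeff_map] at hp
    -- Replacing the constant term of `f` by `b` does not change its image over `P ⧸ I₂`.
    refine ⟨q (f - Polynomial.C (f.coeff 0) + Polynomial.C b), ⟨?_, ?_⟩, ?_⟩
    · rw [hi₁, hφ₁]
      simp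
    · rw [hi₂, hφ₂, hφ₂]
      simp [hp]
    · rintro a ⟨h₁, h₂⟩
      obtain ⟨g, rfl⟩ := hq a
      rw [← sub_eq_zero, ← map_sub, hk]
      rw [hi₁] at h₁
      rw [hi₂] at h₂
      rw [map_sub, map_sub, h₁, h₂, sub_eq_zero, sub_eq_zero, hφ₁, hφ₂, hφ₂]
      constructor
      · simp
      · simp [hp]

/-! ### Splitting off one variable from a monomial ideal -/

/-- The exponent vector `d` with its `k`-th entry removed. -/
noncomputable def dropAt {n : ℕ} (k : Fin (n + 1)) (d : Fin (n + 1) →₀ ℕ) : Fin n →₀ ℕ :=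
  Finsupp.equivFunOnFinite.symm fun i => d (k.succAbove i)

@[simp] lemma dropAt_apply {n : ℕ} (k : Fin (n + 1)) (d : Fin (n + 1) →₀ ℕ) (i : Fin n) :
    dropAt k d i = d (k.succAbove i) := rfl

lemma eq_zero_of_dropAt {n : ℕ} {k : Fin (n + 1)} {d : Fin (n + 1) →₀ ℕ}
    (h : dropAt k d = 0) (hk : d k = 0) : d = 0 := by
  ext i
  obtain rfl | ⟨j, rfl⟩ := Fin.eq_self_or_eq_succAbove k i
  · exact hk
  · exact DFunLike.congr_fun h j

/-- The ideal of `R[x_1,…,x_n]` generated by the monomials `x^d`, `d ∈ S`. -/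
noncomputable abbrev dhaIdeal (R : Type*) [CommRing R] {n : ℕ} (S : Finset (Fin n →₀ ℕ)) :
    Ideal (MvPolynomial (Fin n) R) :=
  Ideal.span ((fun d => (MvPolynomial.monomial d (1 : R) : MvPolynomial (Fin n) R)) '' S)

/-- `R[x_1,…,x_{n+1}]` as polynomials in the `k`-th variable over the polynomial ring in the
others. -/
noncomputable def splitVar (R : Type*) [CommRing R] {n : ℕ} (k : Fin (n + 1)) :
    MvPolynomial (Fin (n + 1)) R ≃ₐ[R] Polynomial (MvPolynomial (Fin n) R) :=
  (renameEquiv R (finSuccEquiv' k)).trans (optionEquivLeft R (Fin n))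

lemma splitVar_monomial (R : Type*) [CommRing R] {n : ℕ} (k : Fin (n + 1))
    (d : Fin (n + 1) →₀ ℕ) :
    splitVar R k (monomial d 1) =
      Polynomial.C (monomial (dropAt k d) 1) * Polynomial.X ^ d k := by
  have h1 : splitVar R k (X k) = Polynomial.X := by
    simp [splitVar]
  have h2 : ∀ i, splitVar R k (X (k.succAbove i)) = Polynomial.C (X i) := by
    intro i
    simp [splitVar]
  rw [monomial_eq, monomial_eq, Finsupp.prod_fintype _ _ (by simp),
    Finsupp.prod_fintype _ _ (by simp), Fin.prod_univ_succAbove _ k]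
  simp only [map_mul, map_prod, map_pow, h1, h2, map_one, one_mul, dropAt_apply]
  rw [mul_comm]

/-- The exponents, without their `k`-th entry, of the generators not involving `x_k`. -/
noncomputable def linkOut {n : ℕ} (k : Fin (n + 1)) (S : Finset (Fin (n + 1) →₀ ℕ)) :
    Finset (Fin n →₀ ℕ) :=
  (S.filter fun d => d k = 0).image (dropAt k)

lemma dhaIdeal_linkOut_le (R : Type*) [CommRing R] {n : ℕ} (k : Fin (n + 1))
    (S : Finset (Fin (n + 1) →₀ ℕ)) :
    dhaIdeal R (linkOut k S) ≤ dhaIdeal R (S.image (dropAt k)) := by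
  apply Ideal.span_mono
  apply Set.image_mono
  exact_mod_cast Finset.image_subset_image (Finset.filter_subset _ _)

/-- Membership in an ideal generated by monomials of degree at most `1` in `x_k`, in terms of the
coefficients with respect to `x_k`. -/
lemma mem_dhaIdeal_iff (R : Type*) [CommRing R] {n : ℕ} (k : Fin (n + 1))
    (S : Finset (Fin (n + 1) →₀ ℕ)) (hS : ∀ d ∈ S, d k ≤ 1)
    (f : Polynomial (MvPolynomial (Fin n) R)) :
    (splitVar R k).symm f ∈ dhaIdeal R S ↔
      f.coeff 0 ∈ dhaIdeal R (linkOut k S) ∧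
        ∀ j, f.coeff j ∈ dhaIdeal R (S.image (dropAt k)) := by
  constructor
  · obtain ⟨g, rfl⟩ := (splitVar R k).surjective f
    rw [AlgEquiv.symm_apply_apply]
    intro hg
    refine Submodule.span_induction (p := fun g _ =>
      (splitVar R k g).coeff 0 ∈ dhaIdeal R (linkOut k S) ∧
        ∀ j, (splitVar R k g).coeff j ∈ dhaIdeal R (S.image (dropAt k))) ?_ ?_ ?_ ?_ hg
    · rintro _ ⟨d, hd, rfl⟩
      have hd' : d ∈ S := hd
      simp only [splitVar_monomial, Polynomial.coeff_C_mul]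
      constructor
      · by_cases h0 : d k = 0
        · refine Ideal.mul_mem_right _ _ (Ideal.subset_span ⟨_, ?_, rfl⟩)
          exact Finset.mem_image_of_mem _ (Finset.mem_filter.2 ⟨hd', h0⟩)
        · rw [Polynomial.coeff_X_pow, if_neg (Ne.symm h0), mul_zero]
          exact Ideal.zero_mem _
      · intro j
        refine Ideal.mul_mem_right _ _ (Ideal.subset_span ⟨_, ?_, rfl⟩)
        exact Finset.mem_image_of_mem _ hd'
    · simp
    · rintro a b - - ⟨ha, ha'⟩ ⟨hb, hb'⟩
      simp only [map_add, Polynomial.coeff_add]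
      exact ⟨Ideal.add_mem _ ha hb, fun j => Ideal.add_mem _ (ha' j) (hb' j)⟩
    · rintro a b - ⟨hb, hb'⟩
      simp only [smul_eq_mul, map_mul]
      constructor
      · rw [Polynomial.mul_coeff_zero]
        exact Ideal.mul_mem_left _ _ hb
      · intro j
        rw [Polynomial.coeff_mul]
        exact Ideal.sum_mem _ fun x _ => Ideal.mul_mem_left _ _ (hb' _)
  · rintro ⟨h0, h⟩
    have key : ∀ d ∈ S, ∀ g : Polynomial (MvPolynomial (Fin n) R),
        Polynomial.C (monomial (dropAt k d) 1) * Polynomial.X ^ d k ∣ g →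
          (splitVar R k).symm g ∈ dhaIdeal R S := by
      rintro d hd _ ⟨g, rfl⟩
      rw [← splitVar_monomial, map_mul, AlgEquiv.symm_apply_apply]
      exact Ideal.mul_mem_right _ _ (Ideal.subset_span ⟨d, hd, rfl⟩)
    have hC : ∀ a ∈ dhaIdeal R (linkOut k S),
        (splitVar R k).symm (Polynomial.C a) ∈ dhaIdeal R S := by
      intro a ha
      refine Submodule.span_induction (p := fun a _ =>
        (splitVar R k).symm (Polynomial.C a) ∈ dhaIdeal R S) ?_ ?_ ?_ ?_ ha
      · rintro _ ⟨e, he, rfl⟩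
        obtain ⟨d, hd, rfl⟩ := Finset.mem_image.1 (Finset.mem_coe.1 he)
        obtain ⟨hd, hdk⟩ := Finset.mem_filter.1 hd
        exact key d hd _ (by simp [hdk])
      · simp
      · intro a b _ _ ha hb
        simpa only [map_add] using Ideal.add_mem _ ha hb
      · intro a b _ hb
        simpa only [smul_eq_mul, map_mul] using Ideal.mul_mem_left _ _ hb
    have hX : ∀ a ∈ dhaIdeal R (S.image (dropAt k)),
        (splitVar R k).symm (Polynomial.C a * Polynomial.X) ∈ dhaIdeal R S := by
      intro a ha
      refine Submodule.span_induction (p := fun a _ =>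
        (splitVar R k).symm (Polynomial.C a * Polynomial.X) ∈ dhaIdeal R S) ?_ ?_ ?_ ?_ ha
      · rintro _ ⟨e, he, rfl⟩
        obtain ⟨d, hd, rfl⟩ := Finset.mem_image.1 (Finset.mem_coe.1 he)
        -- This is where square-freeness enters: `x_k ^ d k` divides `x_k`.
        exact key d hd _ (mul_dvd_mul_left _ (by simpa using pow_dvd_pow Polynomial.X (hS d hd)))
      · simp
      · intro a b _ _ ha hb
        simpa only [map_add, add_mul] using Ideal.add_mem _ ha hb
      · intro a b _ hb
        simpa only [smul_eq_mul, map_mul, mul_assoc] using Ideal.mul_mem_left _ _ hb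
    rw [← Polynomial.divX_mul_X_add f, map_add]
    refine Ideal.add_mem _ ?_ (hC _ h0)
    rw [Polynomial.as_sum_range_C_mul_X_pow f.divX, Finset.sum_mul, map_sum]
    refine Ideal.sum_mem _ fun j _ => ?_
    rw [Polynomial.coeff_divX, mul_right_comm, map_mul]
    exact Ideal.mul_mem_right _ _ (hX _ (h _))

/-! ### Presentations after removing a variable -/

/-- Removing the last variable `x_{m+1}` allowed in the generators leaves a presentation whose
generators involve only the first `m` variables. -/
lemma sqFreePresentation_dropAt (R : Type u) [CommRing R] {n m : ℕ} (k : Fin (n + 1))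
    (hk : (k : ℕ) = m) (S : Finset (Fin (n + 1) →₀ ℕ))
    (hS : ∀ d ∈ S, d ≠ 0 ∧ (∀ i, d i ≤ 1) ∧ ∀ i : Fin (n + 1), d i ≠ 0 → (i : ℕ) < m + 1)
    (T : Finset (Fin n →₀ ℕ)) (hT : T ⊆ S.image (dropAt k)) (h0 : 0 ∉ T) :
    (∀ d ∈ T, d ≠ 0 ∧ ∀ i, d i ≤ 1) ∧
      SqFreePresentation R (DiscreteHodgeAlgebra R n T) m := by
  have hT' : ∀ d ∈ T, d ≠ 0 ∧ (∀ i, d i ≤ 1) ∧ ∀ i : Fin n, d i ≠ 0 → (i : ℕ) < m := by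
    intro e he
    obtain ⟨d, hd, rfl⟩ := Finset.mem_image.1 (hT he)
    refine ⟨fun h => h0 (h ▸ he), fun i => (hS d hd).2.1 _, fun i hi => ?_⟩
    have := (hS d hd).2.2 _ hi
    by_contra hlt
    rw [Fin.succAbove_of_le_castSucc k i (by rw [Fin.le_def]; simp; omega)] at this
    simp at this
    omega
  exact ⟨fun d hd => ⟨(hT' d hd).1, (hT' d hd).2.1⟩, n, by omega, T, hT', ⟨AlgEquiv.refl⟩⟩

/-- if `A` is a square-free discrete Hodge algebra over `R` with `m₀(A) > 0`, then
there are square-free discrete Hodge algebras `A₁`, `A₂` over `R` with `m₀(A₁) < m₀(A)` and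
`m₀(A₂) < m₀(A)` and a Cartesian square of surjective `R`-algebra homomorphisms
`i₁ : A → A₁`, `i₂ : A → A₂[x]`, `j₁ : A₁ → A₂`, `j₂ : A₂[x] → A₂` with `j₁ ∘ i₁ = j₂ ∘ i₂`,
where `j₂` is evaluation at `x = 0`. -/
theorem statement4 (R : Type u) [CommRing R] (A : Type u) [CommRing A] [Algebra R A]
    (hA : ∃ m, SqFreePresentation R A m) (hm : 0 < mZero R A) :
    ∃ (n₁ : ℕ) (S₁ : Finset (Fin n₁ →₀ ℕ)) (n₂ : ℕ) (S₂ : Finset (Fin n₂ →₀ ℕ)),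
      (∀ d ∈ S₁, d ≠ 0 ∧ ∀ i, d i ≤ 1) ∧
      (∀ d ∈ S₂, d ≠ 0 ∧ ∀ i, d i ≤ 1) ∧
      mZero R (DiscreteHodgeAlgebra R n₁ S₁) < mZero R A ∧
      mZero R (DiscreteHodgeAlgebra R n₂ S₂) < mZero R A ∧
      ∃ (i₁ : A →ₐ[R] DiscreteHodgeAlgebra R n₁ S₁)
        (i₂ : A →ₐ[R] Polynomial (DiscreteHodgeAlgebra R n₂ S₂))
        (j₁ : DiscreteHodgeAlgebra R n₁ S₁ →ₐ[R] DiscreteHodgeAlgebra R n₂ S₂),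
        -- `j₂ : A₂[x] → A₂` is evaluation at `x = 0`:
        let j₂ : Polynomial (DiscreteHodgeAlgebra R n₂ S₂) →ₐ[R] DiscreteHodgeAlgebra R n₂ S₂ :=
          (Polynomial.aeval (0 : DiscreteHodgeAlgebra R n₂ S₂) :
            Polynomial (DiscreteHodgeAlgebra R n₂ S₂) →ₐ[DiscreteHodgeAlgebra R n₂ S₂]
              DiscreteHodgeAlgebra R n₂ S₂).restrictScalars R
        Function.Surjective i₁ ∧ Function.Surjective i₂ ∧
        Function.Surjective j₁ ∧ Function.Surjective j₂ ∧
        j₁.comp i₁ = j₂.comp i₂ ∧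
        -- the square is Cartesian:
        ∀ (a₁ : DiscreteHodgeAlgebra R n₁ S₁) (p : Polynomial (DiscreteHodgeAlgebra R n₂ S₂)),
          j₁ a₁ = j₂ p → ∃! a : A, i₁ a = a₁ ∧ i₂ a = p := by
  classical
  obtain ⟨n, hmn, S, hS, ⟨e⟩⟩ : SqFreePresentation R A (mZero R A) := Nat.sInf_mem hA
  obtain ⟨m, hm'⟩ : ∃ m, mZero R A = m + 1 := Nat.exists_eq_succ_of_ne_zero hm.ne'
  have hmin : ¬ SqFreePresentation R A m := fun h => by
    have : mZero R A ≤ m := Nat.sInf_le h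
    omega
  rw [hm'] at hmn hS
  obtain ⟨n, rfl⟩ : ∃ n', n = n' + 1 := ⟨n - 1, by omega⟩
  let k : Fin (n + 1) := ⟨m, hmn⟩
  let q : Polynomial (MvPolynomial (Fin n) R) →ₐ[R] A :=
    (e.symm : _ →ₐ[R] A).comp
      ((Ideal.Quotient.mkₐ R (dhaIdeal R S)).comp ((splitVar R k).symm : _ →ₐ[R] _))
  have hq : Function.Surjective q :=
    e.symm.surjective.comp (Ideal.Quotient.mk_surjective.comp (splitVar R k).symm.surjective)
  have hker : ∀ f, q f = 0 ↔ f.coeff 0 ∈ dhaIdeal R (linkOut k S) ∧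
      ∀ j, f.coeff j ∈ dhaIdeal R (S.image (dropAt k)) := by
    intro f
    rw [← mem_dhaIdeal_iff R k S (fun d hd => (hS d hd).2.1 k), ← Ideal.Quotient.eq_zero_iff_mem]
    exact EmbeddingLike.map_eq_zero_iff (f := e.symm)
  obtain ⟨i₁, i₂, j₁, s₁, s₂, t₁, t₂, hcomm, hcart⟩ :=
    cartesian_of_ker _ _ (dhaIdeal_linkOut_le R k S) q hq hker
  have hsub : linkOut k S ⊆ S.image (dropAt k) :=
    Finset.image_subset_image (Finset.filter_subset _ _)
  have h01 : (0 : Fin n →₀ ℕ) ∉ linkOut k S := by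
    intro h
    obtain ⟨d, hd, hd0⟩ := Finset.mem_image.1 h
    obtain ⟨hd, hdk⟩ := Finset.mem_filter.1 hd
    exact (hS d hd).1 (eq_zero_of_dropAt hd0 hdk)
  obtain ⟨hS₁, hP₁⟩ := sqFreePresentation_dropAt R k rfl S hS _ hsub h01
  have h02 : (0 : Fin n →₀ ℕ) ∉ S.image (dropAt k) := by
    intro h
    -- Here `A₂ = 0`, so `i₁` is an isomorphism, against the minimality of `m₀(A)`.
    have htop : dhaIdeal R (S.image (dropAt k)) = ⊤ :=
      (Ideal.eq_top_iff_one _).2 (Ideal.subset_span ⟨0, h, rfl⟩)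
    have hss : Subsingleton (MvPolynomial (Fin n) R ⧸ dhaIdeal R (S.image (dropAt k))) :=
      Ideal.Quotient.subsingleton_iff.2 htop
    have hinj : Function.Injective i₁ := by
      intro a b hab
      exact (hcart (i₁ b) (i₂ b) (Subsingleton.elim _ _)).unique
        ⟨hab, Subsingleton.elim _ _⟩ ⟨rfl, rfl⟩
    obtain ⟨n', hn', T, hT, ⟨g⟩⟩ := hP₁
    exact hmin ⟨n', hn', T, hT, ⟨(AlgEquiv.ofBijective i₁ ⟨hinj, s₁⟩).trans g⟩⟩
  obtain ⟨hS₂, hP₂⟩ := sqFreePresentation_dropAt R k rfl S hS _ subset_rfl h02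
  have hlt : ∀ T : Finset (Fin n →₀ ℕ), SqFreePresentation R (DiscreteHodgeAlgebra R n T) m →
      mZero R (DiscreteHodgeAlgebra R n T) < mZero R A := by
    intro T hT
    rw [hm']
    exact Nat.lt_succ_of_le (Nat.sInf_le hT)
  exact ⟨n, linkOut k S, n, S.image (dropAt k), hS₁, hS₂, hlt _ hP₁, hlt _ hP₂,
    i₁, i₂, j₁, s₁, s₂, t₁, t₂, hcomm, hcart⟩
end

section
/- Let R be a commutative ring and let a Cartesian (pullback) square of commutative R-algebras be given with maps i_1: A → A_1, i_2: A → A_2, j_1: A_1 → B, j_2: A_2 → B, j_1 ∘ i_1 = j_2 ∘ i_2, where j_1 is surjective and admits an R-algebra section s: B → A_1 (j_1 ∘ s = id_B); let r: A_2 → A be the induced section of i_2, r(a) = (s(j_2(a)), a) under the identification A ≅ A_1 ×_B A_2. Let P be a finitely generated projective A-module. If the A_1-module A_1 ⊗_A P is extended from B along s (i.e. there is a B-module Q_0 with A_1 ⊗_A P ≅ A_1 ⊗_B Q_0, A_1 regarded as a B-algebra via s), then P is extended from A_2 along r, i.e. P ≅ A ⊗_{A_2} (A_2 ⊗_A P)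 with A regarded as an A_2-algebra via r. In particular, if A_1 ⊗_A P and A_2 ⊗_A P are free of rank m, then P is free of rank m. -/
/-!
Two flat (in particular, two projective) `A`-modules `P` and `N` are each the fibre product of their base
changes to `A₁` and `A₂` over the base change to `B` (flatness, `existsUnique_patch`). So
isomorphisms `f₁ : A₁ ⊗ P ≃ A₁ ⊗ N` and `f₂ : A₂ ⊗ P ≃ A₂ ⊗ N` glue to an isomorphism `P ≃ N` as
soon as they agree over `B` (`patch_equiv`). In general they differ over `B` by an automorphism `θ`
of `B ⊗ N`. When `A₁ ⊗ N ≃ A₁ ⊗_B Q` is extended along the section `s`, then `B ⊗ N ≃ Q`, and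
`θ` lifts to the automorphism of `A₁ ⊗ N` obtained from it by base change along `s`
(`exists_lift_aut`); correcting `f₁` by this lift makes the pair glue. Hence `P ≃ N` as soon as they
are isomorphic over `A₁` and over `A₂` separately and `A₁ ⊗ N` is extended
(`nonempty_equiv_of_extended`).

Both claims are instances of this: `N = A ⊗_{A₂} (A₂ ⊗_A P)` for the first, `N = A ^ m` for the
second. In the first case `A₁ ⊗ N ≃ A₁ ⊗_B (B ⊗ P)` because `i₁ ∘ r = s ∘ j₂`, and `B ⊗ P ≃ Q`.
-/

universe u

open TensorProduct

/-- `P` (a `D`-module) is extended from `C` along the ring homomorphism `f : C → D`: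
there is a `C`-module `Q` with `P ≅ D ⊗_C Q` as `D`-modules (`D` regarded as a `C`-algebra
via `f`). -/
def ExtendedAlong {C D : Type u} [CommRing C] [CommRing D] (f : C →+* D)
    (P : Type u) [AddCommGroup P] [Module D P] : Prop :=
  letI : Algebra C D := f.toAlgebra
  ∃ Q : ModuleCat.{u} C, Nonempty (P ≃ₗ[D] TensorProduct C D Q)

section Patching

open AlgebraTensorModule

/-- The map `A₁ ⊗ P → B ⊗ P` induced by `A₁ → B`, taken `A`-linear so that its values for `A₁` and
for `A₂` can be compared in `B ⊗ P`. -/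
noncomputable def toFibre (A A₁ B P : Type u) [CommRing A] [CommRing A₁] [CommRing B]
    [Algebra A A₁] [Algebra A₁ B] [Algebra A B] [IsScalarTower A A₁ B]
    [AddCommGroup P] [Module A P] : A₁ ⊗[A] P →ₗ[A] B ⊗[A] P :=
  (IsScalarTower.toAlgHom A A₁ B).toLinearMap.rTensor P

variable {A A₁ A₂ B : Type u} [CommRing A] [CommRing A₁] [CommRing A₂] [CommRing B]
  [Algebra A A₁] [Algebra A A₂] [Algebra A₁ B] [Algebra A₂ B] [Algebra A B]
  [IsScalarTower A A₁ B] [IsScalarTower A A₂ B]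
  {P N : Type u} [AddCommGroup P] [Module A P] [AddCommGroup N] [Module A N]

@[simp] lemma toFibre_tmul (a : A₁) (x : P) :
    toFibre A A₁ B P (a ⊗ₜ x) = algebraMap A₁ B a ⊗ₜ x := rfl

lemma toFibre_eq (x : A₁ ⊗[A] P) :
    toFibre A A₁ B P x = cancelBaseChange A A₁ B B P (1 ⊗ₜ x) := by
  induction x with
  | zero => simp
  | tmul a p => simp [Algebra.smul_def]
  | add x y hx hy => simp [tmul_add, hx, hy]

/-- An isomorphism over `A₁` induces one over `B`. -/
lemma exists_fibre_equiv (f : A₁ ⊗[A] P ≃ₗ[A₁] A₁ ⊗[A] N) :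
    ∃ F : B ⊗[A] P ≃ₗ[B] B ⊗[A] N, ∀ x, F (toFibre A A₁ B P x) = toFibre A A₁ B N (f x) := by
  refine ⟨(cancelBaseChange A A₁ B B P).symm ≪≫ₗ f.baseChange A₁ B _ _ ≪≫ₗ
    cancelBaseChange A A₁ B B N, fun x ↦ ?_⟩
  simp only [toFibre_eq, LinearEquiv.trans_apply, LinearEquiv.symm_apply_apply,
    LinearEquiv.baseChange_tmul]

/-- A flat module is the fibre product of its base changes: this is the Cartesian square
tensored with `N`. -/
lemma existsUnique_patch [Module.Flat A N]
    (hcart : ∀ (a₁ : A₁) (a₂ : A₂), algebraMap A₁ B a₁ = algebraMap A₂ B a₂ →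
      ∃! a : A, algebraMap A A₁ a = a₁ ∧ algebraMap A A₂ a = a₂)
    (x₁ : A₁ ⊗[A] N) (x₂ : A₂ ⊗[A] N) (h : toFibre A A₁ B N x₁ = toFibre A A₂ B N x₂) :
    ∃! y : N, 1 ⊗ₜ y = x₁ ∧ 1 ⊗ₜ y = x₂ := by
  -- `0 → A → A₁ × A₂ → B` is exact, and stays exact after tensoring with the flat module `N`.
  let d : A →ₗ[A] A₁ × A₂ := (Algebra.linearMap A A₁).prod (Algebra.linearMap A A₂)
  let δ : A₁ × A₂ →ₗ[A] B := (IsScalarTower.toAlgHom A A₁ B).toLinearMap.coprod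
    (-(IsScalarTower.toAlgHom A A₂ B).toLinearMap)
  have hd : Function.Injective d := by
    intro a b hab
    have hab' : algebraMap A A₁ a = algebraMap A A₁ b ∧ algebraMap A A₂ a = algebraMap A A₂ b := by
      simpa [d] using hab
    exact (hcart (algebraMap A A₁ b) (algebraMap A A₂ b) (by
      rw [← IsScalarTower.algebraMap_apply, ← IsScalarTower.algebraMap_apply])).unique
      hab' ⟨rfl, rfl⟩
  have hex : Function.Exact d δ := by
    rintro ⟨a₁, a₂⟩
    have hδ : δ (a₁, a₂) = algebraMap A₁ B a₁ - algebraMap A₂ B a₂ := by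
      simp [δ, sub_eq_add_neg]
    rw [hδ, sub_eq_zero]
    constructor
    · intro h
      obtain ⟨a, ⟨h1, h2⟩, -⟩ := hcart a₁ a₂ h
      exact ⟨a, Prod.ext h1 h2⟩
    · rintro ⟨a, ha⟩
      obtain ⟨rfl, rfl⟩ := Prod.mk.inj ha
      simp only [Algebra.linearMap_apply]
      rw [← IsScalarTower.algebraMap_apply, ← IsScalarTower.algebraMap_apply]
  have hdN := Module.Flat.rTensor_preserves_injective_linearMap (M := N) d hd
  have hexN := Module.Flat.rTensor_exact N hex
  let e := TensorProduct.prodLeft A A A₁ A₂ N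
  have h₁ : ∀ y : N, e (d.rTensor N (1 ⊗ₜ y)) = (1 ⊗ₜ y, 1 ⊗ₜ y) := by
    intro y
    simp [d, e]
  have h₂ : ∀ z : (A₁ × A₂) ⊗[A] N,
      δ.rTensor N z = toFibre A A₁ B N (e z).1 - toFibre A A₂ B N (e z).2 := by
    intro z
    induction z with
    | zero => simp
    | tmul a p => obtain ⟨a₁, a₂⟩ := a; simp [δ, e, add_tmul, neg_tmul, sub_eq_add_neg]
    | add x y hx hy => simp only [map_add, hx, hy, Prod.fst_add, Prod.snd_add]; abel
  obtain ⟨t, ht⟩ := (hexN (e.symm (x₁, x₂))).1 (by rw [h₂]; simp [h])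
  have ht' : (1 : A) ⊗ₜ[A] (TensorProduct.lid A N t) = t := (TensorProduct.lid A N).symm_apply_apply t
  refine ⟨TensorProduct.lid A N t, ?_, ?_⟩
  · have := h₁ (TensorProduct.lid A N t)
    rw [ht', ht, e.apply_symm_apply] at this
    exact ⟨(congrArg Prod.fst this).symm, (congrArg Prod.snd this).symm⟩
  · rintro y ⟨rfl, rfl⟩
    rw [← h₁ y, e.symm_apply_apply] at ht
    rw [hdN ht, TensorProduct.lid_tmul, one_smul]

lemma exists_patch_linearMap [Module.Flat A N]
    (hcart : ∀ (a₁ : A₁) (a₂ : A₂), algebraMap A₁ B a₁ = algebraMap A₂ B a₂ →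
      ∃! a : A, algebraMap A A₁ a = a₁ ∧ algebraMap A A₂ a = a₂)
    (f₁ : A₁ ⊗[A] P →ₗ[A₁] A₁ ⊗[A] N) (f₂ : A₂ ⊗[A] P →ₗ[A₂] A₂ ⊗[A] N)
    (h : ∀ x : P, toFibre A A₁ B N (f₁ (1 ⊗ₜ x)) = toFibre A A₂ B N (f₂ (1 ⊗ₜ x))) :
    ∃ g : P →ₗ[A] N, g.baseChange A₁ = f₁ ∧ g.baseChange A₂ = f₂ := by
  choose g hg hu using fun x ↦ existsUnique_patch hcart _ _ (h x)
  refine ⟨{ toFun := g, map_add' := fun x y ↦ ?_, map_smul' := fun a x ↦ ?_ }, ?_, ?_⟩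
  · refine (hu _ _ ?_).symm
    simp only [tmul_add, map_add, (hg x).1, (hg y).1, (hg x).2, (hg y).2, and_self]
  · refine (hu _ _ ?_).symm
    simp only [tmul_smul, RingHom.id_apply, (hg x).1, (hg x).2,
      LinearMap.map_smul_of_tower, and_self]
  · ext x
    simpa using (hg x).1
  · ext x
    simpa using (hg x).2

/-- Isomorphisms over `A₁` and `A₂` that induce the same isomorphism `F` over `B` glue. -/
lemma patch_equiv [Module.Flat A P] [Module.Flat A N]
    (hcart : ∀ (a₁ : A₁) (a₂ : A₂), algebraMap A₁ B a₁ = algebraMap A₂ B a₂ →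
      ∃! a : A, algebraMap A A₁ a = a₁ ∧ algebraMap A A₂ a = a₂)
    (f₁ : A₁ ⊗[A] P ≃ₗ[A₁] A₁ ⊗[A] N) (f₂ : A₂ ⊗[A] P ≃ₗ[A₂] A₂ ⊗[A] N)
    (F : B ⊗[A] P ≃ₗ[B] B ⊗[A] N)
    (h₁ : ∀ x, F (toFibre A A₁ B P x) = toFibre A A₁ B N (f₁ x))
    (h₂ : ∀ x, F (toFibre A A₂ B P x) = toFibre A A₂ B N (f₂ x)) :
    Nonempty (P ≃ₗ[A] N) := by
  obtain ⟨g, hg₁, hg₂⟩ := exists_patch_linearMap hcart f₁.toLinearMap f₂.toLinearMap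
    (fun x ↦ by simp [← h₁, ← h₂])
  obtain ⟨k, hk₁, hk₂⟩ := exists_patch_linearMap (P := N) (N := P) (B := B) hcart
    f₁.symm.toLinearMap f₂.symm.toLinearMap
    (fun x ↦ F.injective (by simp [h₁, h₂]))
  have g₁ (x : P) : (1 : A₁) ⊗ₜ[A] g x = f₁ (1 ⊗ₜ x) := LinearMap.congr_fun hg₁ (1 ⊗ₜ x)
  have g₂ (x : P) : (1 : A₂) ⊗ₜ[A] g x = f₂ (1 ⊗ₜ x) := LinearMap.congr_fun hg₂ (1 ⊗ₜ x)
  have k₁ (x : N) : (1 : A₁) ⊗ₜ[A] k x = f₁.symm (1 ⊗ₜ x) := LinearMap.congr_fun hk₁ (1 ⊗ₜ x)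
  have k₂ (x : N) : (1 : A₂) ⊗ₜ[A] k x = f₂.symm (1 ⊗ₜ x) := LinearMap.congr_fun hk₂ (1 ⊗ₜ x)
  refine ⟨LinearEquiv.ofLinearMap g k ?_ ?_⟩
  · ext x
    exact (existsUnique_patch (B := B) hcart (1 ⊗ₜ x) (1 ⊗ₜ x) (by simp)).unique
      ⟨by simp [g₁, k₁], by simp [g₂, k₂]⟩ ⟨rfl, rfl⟩
  · ext x
    exact (existsUnique_patch (B := B) hcart (1 ⊗ₜ x) (1 ⊗ₜ x) (by simp)).unique
      ⟨by simp [g₁, k₁], by simp [g₂, k₂]⟩ ⟨rfl, rfl⟩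

variable [Algebra B A₁] [IsScalarTower B A₁ B] {Q : Type u} [AddCommGroup Q] [Module B Q]

/-- If `A₁ ⊗ P` is extended from the `B`-module `Q` along a section of `A₁ → B`, then `Q` is the
base change of `P` to `B`, and `A₁ ⊗ P → B ⊗ P` becomes the map `A₁ ⊗_B Q → B ⊗_B Q = Q`. -/
lemma exists_fibre_equiv_of_extended (e : A₁ ⊗[A] P ≃ₗ[A₁] A₁ ⊗[B] Q) :
    ∃ φ : B ⊗[A] P ≃ₗ[B] Q, ∀ x, φ (toFibre A A₁ B P x) =
      TensorProduct.lid B Q (toFibre B A₁ B Q (e x)) := by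
  refine ⟨(cancelBaseChange A A₁ B B P).symm ≪≫ₗ e.baseChange A₁ B _ _ ≪≫ₗ
    cancelBaseChange B A₁ B B Q ≪≫ₗ TensorProduct.lid B Q, fun x ↦ ?_⟩
  simp only [toFibre_eq, LinearEquiv.trans_apply, LinearEquiv.symm_apply_apply,
    LinearEquiv.baseChange_tmul]

/-- Automorphisms over `B` of a module extended from `B` lift: through `B ⊗ N ≃ Q`, `θ` becomes an
automorphism of `Q`, whose base change along the section is the lift. -/
lemma exists_lift_aut (e : A₁ ⊗[A] N ≃ₗ[A₁] A₁ ⊗[B] Q) (θ : B ⊗[A] N ≃ₗ[B] B ⊗[A] N) :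
    ∃ Θ : A₁ ⊗[A] N ≃ₗ[A₁] A₁ ⊗[A] N,
      ∀ x, toFibre A A₁ B N (Θ x) = θ (toFibre A A₁ B N x) := by
  obtain ⟨φ, hφ⟩ := exists_fibre_equiv_of_extended (B := B) e
  let θ' : Q ≃ₗ[B] Q := φ.symm ≪≫ₗ θ ≪≫ₗ φ
  have key : ∀ z : A₁ ⊗[B] Q, TensorProduct.lid B Q (toFibre B A₁ B Q (θ'.baseChange B A₁ _ _ z)) =
      θ' (TensorProduct.lid B Q (toFibre B A₁ B Q z)) := by
    intro z
    induction z with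
    | zero => simp
    | tmul a q => simp only [LinearEquiv.baseChange_tmul, toFibre_tmul, TensorProduct.lid_tmul,
        map_smul]
    | add x y hx hy => simp only [map_add, hx, hy]
  refine ⟨e ≪≫ₗ θ'.baseChange B A₁ _ _ ≪≫ₗ e.symm, fun x ↦ φ.injective ?_⟩
  simp only [hφ, LinearEquiv.trans_apply, LinearEquiv.apply_symm_apply, key]
  simp [θ', ← hφ]

/-- If `A₁ ⊗ N` is extended along a section of `A₁ → B`, isomorphisms over `A₁` and over `A₂`
descend to `A` without any compatibility over `B`. -/
lemma nonempty_equiv_of_extended [Module.Flat A P] [Module.Flat A N]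
    (hcart : ∀ (a₁ : A₁) (a₂ : A₂), algebraMap A₁ B a₁ = algebraMap A₂ B a₂ →
      ∃! a : A, algebraMap A A₁ a = a₁ ∧ algebraMap A A₂ a = a₂)
    (e : A₁ ⊗[A] N ≃ₗ[A₁] A₁ ⊗[B] Q)
    (f₁ : A₁ ⊗[A] P ≃ₗ[A₁] A₁ ⊗[A] N) (f₂ : A₂ ⊗[A] P ≃ₗ[A₂] A₂ ⊗[A] N) :
    Nonempty (P ≃ₗ[A] N) := by
  obtain ⟨F₁, hF₁⟩ := exists_fibre_equiv (B := B) f₁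
  obtain ⟨F₂, hF₂⟩ := exists_fibre_equiv (B := B) f₂
  obtain ⟨Θ, hΘ⟩ := exists_lift_aut e (F₁.symm ≪≫ₗ F₂)
  -- `θ = F₂ ∘ F₁⁻¹` measures the failure of `f₁` and `f₂` to agree over `B`.
  refine patch_equiv hcart (f₁ ≪≫ₗ Θ) f₂ F₂ (fun x ↦ ?_) hF₂
  simp [hΘ, ← hF₁]

/-- Over `A₁`, the module induced along `r : A₂ → A` from `A₂ ⊗ P` is isomorphic to `A₁ ⊗ P` when
the latter is extended along `s`: the two composites `A₂ → A → A₁` and `A₂ → B → A₁` agree. -/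
lemma nonempty_induced_equiv [Algebra A₂ A] [Algebra A₂ A₁] [IsScalarTower A₂ A A₁]
    [IsScalarTower A₂ B A₁] (e : A₁ ⊗[A] P ≃ₗ[A₁] A₁ ⊗[B] Q) :
    Nonempty (A₁ ⊗[A] (A ⊗[A₂] (A₂ ⊗[A] P)) ≃ₗ[A₁] A₁ ⊗[A] P) := by
  obtain ⟨φ, -⟩ := exists_fibre_equiv_of_extended (B := B) e
  exact ⟨cancelBaseChange A₂ A A₁ A₁ (A₂ ⊗[A] P) ≪≫ₗ
    (cancelBaseChange A₂ B A₁ A₁ (A₂ ⊗[A] P)).symm ≪≫ₗ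
    (cancelBaseChange A A₂ B B P ≪≫ₗ φ).baseChange B A₁ _ _ ≪≫ₗ e.symm⟩

end Patching

/-- Milnor patching with a section: given a Cartesian square of commutative
`R`-algebras `i₁ : A → A₁`, `i₂ : A → A₂`, `j₁ : A₁ → B`, `j₂ : A₂ → B` (all maps being the
algebra structure maps) with `j₁` surjective admitting an `R`-algebra section `s`, and `r` the
induced section of `i₂`, every finitely generated projective `A`-module `P` such that
`A₁ ⊗_A P` is extended from `B` along `s` satisfies `P ≅ A ⊗_{A₂} (A₂ ⊗_A P)` (`A` regarded as
an `A₂`-algebra via `r`).  In particular, if `A₁ ⊗_A P` and `A₂ ⊗_A P` are free of rank `m`,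
then `P` is free of rank `m`. -/
theorem statement9 (R : Type u) [CommRing R]
    (A A₁ A₂ B : Type u) [CommRing A] [CommRing A₁] [CommRing A₂] [CommRing B]
    [Algebra R A] [Algebra R A₁] [Algebra R A₂] [Algebra R B]
    [Algebra A A₁] [Algebra A A₂] [Algebra A₁ B] [Algebra A₂ B] [Algebra A B]
    [IsScalarTower R A A₁] [IsScalarTower R A A₂] [IsScalarTower R A₁ B] [IsScalarTower R A₂ B]
    [IsScalarTower A A₁ B] [IsScalarTower A A₂ B]
    -- `j₁` is surjective
    (hj₁ : Function.Surjective (algebraMap A₁ B))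
    -- the square is Cartesian
    (hcart : ∀ (a₁ : A₁) (a₂ : A₂), algebraMap A₁ B a₁ = algebraMap A₂ B a₂ →
      ∃! a : A, algebraMap A A₁ a = a₁ ∧ algebraMap A A₂ a = a₂)
    -- the `R`-algebra section `s` of `j₁`
    (s : B →ₐ[R] A₁) (hs : ∀ b, algebraMap A₁ B (s b) = b)
    -- the induced section `r` of `i₂`, `r(a) = (s(j₂ a), a)`
    (r : A₂ →ₐ[R] A)
    (hr₁ : ∀ a : A₂, algebraMap A A₂ (r a) = a)
    (hr₂ : ∀ a : A₂, algebraMap A A₁ (r a) = s (algebraMap A₂ B a))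
    -- `P` is a finitely generated projective `A`-module
    (P : Type u) [AddCommGroup P] [Module A P] [Module.Finite A P] [Module.Projective A P] :
    -- main claim: if `A₁ ⊗_A P` is extended from `B` along `s`, then
    -- `P ≅ A ⊗_{A₂} (A₂ ⊗_A P)` with `A` an `A₂`-algebra via `r`
    (ExtendedAlong s.toRingHom (TensorProduct A A₁ P) →
      letI : Algebra A₂ A := r.toRingHom.toAlgebra
      Nonempty (P ≃ₗ[A] TensorProduct A₂ A (TensorProduct A A₂ P))) ∧
    -- in particular: if `A₁ ⊗_A P` and `A₂ ⊗_A P` are free of rank `m`, so is `P`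
    (∀ m : ℕ,
      Nonempty (TensorProduct A A₁ P ≃ₗ[A₁] (Fin m → A₁)) →
      Nonempty (TensorProduct A A₂ P ≃ₗ[A₂] (Fin m → A₂)) →
      Nonempty (P ≃ₗ[A] (Fin m → A))) := by
  have hs' : ∀ b : B, algebraMap A₁ B (s.toRingHom b) = b := hs
  let _ : Algebra B A₁ := s.toRingHom.toAlgebra
  have : IsScalarTower B A₁ B := .of_algebraMap_eq fun b ↦ (hs' b).symm
  have : Module.Flat A P := inferInstance
  refine ⟨fun ⟨Q, ⟨e⟩⟩ ↦ ?_, fun m ⟨e₁⟩ ⟨e₂⟩ ↦ ?_⟩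
  · let _ : Algebra A₂ A := r.toRingHom.toAlgebra
    let _ : Algebra A₂ A₁ := (s.toRingHom.comp (algebraMap A₂ B)).toAlgebra
    have : IsScalarTower A₂ B A₁ := .of_algebraMap_eq fun _ ↦ rfl
    have : IsScalarTower A₂ A A₁ := .of_algebraMap_eq fun a ↦ (hr₂ a).symm
    have : IsScalarTower A₂ A A₂ := .of_algebraMap_eq fun a ↦ (hr₁ a).symm
    have : Module.Flat A (A ⊗[A₂] (A₂ ⊗[A] P)) := inferInstance
    obtain ⟨g⟩ := nonempty_induced_equiv (A₂ := A₂) e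
    exact nonempty_equiv_of_extended hcart (g ≪≫ₗ e) g.symm
      ((TensorProduct.lid A₂ (A₂ ⊗[A] P)).symm ≪≫ₗ
        (AlgebraTensorModule.cancelBaseChange A₂ A A₂ A₂ (A₂ ⊗[A] P)).symm)
  · let c (C D : Type u) [CommRing C] [CommRing D] [Algebra C D] :
        D ⊗[C] (Fin m → C) ≃ₗ[D] (Fin m → D) := TensorProduct.piScalarRight C D D (Fin m)
    exact nonempty_equiv_of_extended hcart (c A A₁ ≪≫ₗ (c B A₁).symm)
      (e₁ ≪≫ₗ (c A A₁).symm) (e₂ ≪≫ₗ (c A A₂).symm)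
end

section
/- Let R be a commutative ring. Assume that for every n ≥ 1, every finitely generated projective module over the polynomial ring R[x_1,…,x_n] is extended from R. Then for every discrete Hodge algebra A over R, every finitely generated projective A-module is extended from R (along the structure map R → A). -/
/-!
Isomorphism of finitely generated projective modules is encoded as equivalence of idempotent
matrices (`IdemEquiv`), so that the theorem becomes a statement about rings: over a discrete Hodge
algebra every idempotent matrix is equivalent to one with entries in `R` (`IdemExtended`).

Passing from a monomial ideal to the ideal generated by the squarefree parts of its generators
changes the quotient only by a nil ideal, and equivalences lift along nil ideals
(`IdemExtended.of_local`). For a squarefree monomial ideal `I` not containing the variable `x_k`,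
one has `I = (I + (x_k)) ∩ (I : x_k)`, which presents `R[x]/I` as a fibre product of
`C₀ = R[x]/(I + (x_k))` and `D = R[x]/(I : x_k)` over `C₁ = R[x]/((I : x_k) + (x_k))`. The ideal
`(I : x_k)` is generated by monomials not involving `x_k`, so `D = C₁[x_k]` and `D → C₁` has a
section. If a projective module is extended from `R` over `C₀` and over `D`, its patching datum is
an automorphism over `C₁` of an extended module; the section lifts it to `D`, so the module is
extended over `R[x]/I` (`IdemEquiv.patch`, `IdemExtended.patch`). Treating the variables one after
the other leads to quotients of `R[x]` by sets of variables; these are retracts of `R[x]`, where the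
hypothesis applies.
-/


universe u

open MvPolynomial

open TensorProduct

/-! ### Equivalence of idempotents -/

/-- Algebraic (Murray–von Neumann) equivalence: `e = u v` and `f = v u` for some `u`, `v`. For
idempotent matrices this says that the images, as projective modules, are isomorphic. -/
def IdemEquiv {M : Type*} [Mul M] (e f : M) : Prop := ∃ u v : M, u * v = e ∧ v * u = f

namespace IdemEquiv

lemma refl {M : Type*} [Mul M] {e : M} (he : e * e = e) : IdemEquiv e e := ⟨e, e, he, he⟩

lemma symm {M : Type*} [Mul M] {e f : M} (h : IdemEquiv e f) : IdemEquiv f e := by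
  obtain ⟨u, v, h1, h2⟩ := h
  exact ⟨v, u, h2, h1⟩

lemma map {M N F : Type*} [Mul M] [Mul N] [FunLike F M N] [MulHomClass F M N] (φ : F) {e f : M}
    (h : IdemEquiv e f) : IdemEquiv (φ e) (φ f) := by
  obtain ⟨u, v, rfl, rfl⟩ := h
  exact ⟨φ u, φ v, (map_mul ..).symm, (map_mul ..).symm⟩

/-- The witnesses can be cut down to the corners `e M f` and `f M e`. -/
lemma normalize {M : Type*} [Semigroup M] {e f : M} (he : e * e = e) (hf : f * f = f)
    (h : IdemEquiv e f) : ∃ u v : M, u * v = e ∧ v * u = f ∧ e * u = u ∧ u * f = u ∧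
      f * v = v ∧ v * e = v := by
  obtain ⟨u, v, h1, h2⟩ := h
  refine ⟨e * u * f, f * v * e, ?_, ?_, ?_, ?_, ?_, ?_⟩
  · calc e * u * f * (f * v * e) = e * u * (f * f) * v * e := by simp only [mul_assoc]
      _ = e * (u * v) * (u * v) * e := by rw [hf, ← h2]; simp only [mul_assoc]
      _ = e := by rw [h1]; simp only [he]
  · calc f * v * e * (e * u * f) = f * v * (e * e) * u * f := by simp only [mul_assoc]
      _ = f * (v * u) * (v * u) * f := by rw [he, ← h1]; simp only [mul_assoc]
      _ = f := by rw [h2]; simp only [hf]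
  · rw [← mul_assoc, ← mul_assoc, he]
  · rw [mul_assoc, hf]
  · rw [← mul_assoc, ← mul_assoc, hf]
  · rw [mul_assoc, he]

lemma trans {M : Type*} [Semigroup M] {e f g : M} (he : e * e = e) (hf : f * f = f)
    (hg : g * g = g) (h : IdemEquiv e f) (h' : IdemEquiv f g) : IdemEquiv e g := by
  obtain ⟨u, v, h1, h2, h3, h4, h5, h6⟩ := h.normalize he hf
  obtain ⟨a, b, k1, k2, k3, k4, k5, k6⟩ := h'.normalize hf hg
  refine ⟨u * a, b * v, ?_, ?_⟩
  · calc u * a * (b * v) = u * (a * b) * v := by simp only [mul_assoc]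
      _ = e := by rw [k1, h4, h1]
  · calc b * v * (u * a) = b * (v * u) * a := by simp only [mul_assoc]
      _ = g := by rw [h2, k6, k2]

/-- Equivalences of idempotents lift along a surjective local homomorphism: a lift `u v` of the
given factorization differs from `e` by an element which can be corrected by a unit. -/
lemma of_local {A B : Type*} [Ring A] [Ring B] (φ : A →+* B) (hφ : Function.Surjective φ)
    [IsLocalHom φ] {e f : A} (he : e * e = e) (hf : f * f = f)
    (h : IdemEquiv (φ e) (φ f)) : IdemEquiv e f := by
  obtain ⟨u', v', h1, h2, h3, h4, h5, h6⟩ :=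
    h.normalize (by rw [← map_mul, he]) (by rw [← map_mul, hf])
  obtain ⟨u0, rfl⟩ := hφ u'
  obtain ⟨v0, rfl⟩ := hφ v'
  obtain ⟨u, hu⟩ : ∃ u, u = e * u0 * f := ⟨_, rfl⟩
  obtain ⟨v, hv⟩ : ∃ v, v = f * v0 * e := ⟨_, rfl⟩
  have hφu : φ u = φ u0 := by rw [hu, map_mul, map_mul, h3, h4]
  have hφv : φ v = φ v0 := by rw [hv, map_mul, map_mul, h5, h6]
  have heu : e * u = u := by rw [hu, ← mul_assoc, ← mul_assoc, he]
  have huf : u * f = u := by rw [hu, mul_assoc, hf]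
  have hfv : f * v = v := by rw [hv, ← mul_assoc, ← mul_assoc, hf]
  have hve : v * e = v := by rw [hv, mul_assoc, he]
  obtain ⟨w, hw⟩ : IsUnit (1 - e + u * v) := by
    refine isUnit_of_map_unit φ _ ?_
    simp [hφu, hφv, h1]
  have hwφ : φ (↑w⁻¹ : A) = 1 := by
    have : φ (w : A) = 1 := by rw [hw]; simp [hφu, hφv, h1]
    calc φ (↑w⁻¹ : A) = φ (↑w⁻¹ : A) * φ (w : A) := by rw [this, mul_one]
      _ = 1 := by rw [← map_mul]; simp
  -- `w` acts on the corner `e A e` as `u v`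
  have hew : e * (w : A) = u * v := by
    rw [hw, mul_add, mul_sub, mul_one, he, ← mul_assoc, heu]; simp
  have huvw : u * v * (↑w⁻¹ : A) = e := by rw [← hew]; simp
  have hp : f - v * (↑w⁻¹ : A) * u = 0 := by
    obtain ⟨p, hpdef⟩ : ∃ p, p = v * (↑w⁻¹ : A) * u := ⟨_, rfl⟩
    have hpp : p * p = p := by
      calc p * p = v * (↑w⁻¹ : A) * ((u * v * (↑w⁻¹ : A)) * u) := by
            rw [hpdef]; simp only [mul_assoc]
        _ = p := by rw [huvw, heu, hpdef]
    have hfp : f * p = p := by rw [hpdef, ← mul_assoc, ← mul_assoc, hfv]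
    have hpf : p * f = p := by rw [hpdef, mul_assoc, huf]
    rw [← hpdef]
    -- `1 - (f - p)` is a unit killed by the idempotent `f - p`
    have hun : IsUnit (1 - (f - p)) := by
      refine isUnit_of_map_unit φ _ ?_
      have : φ p = φ f := by rw [hpdef, map_mul, map_mul, hwφ, mul_one, hφu, hφv, h2]
      simp [this]
    have : (1 - (f - p)) * (f - p) = 0 := by
      simp only [sub_mul, mul_sub, one_mul, hf, hfp, hpf, hpp]; abel
    exact hun.mul_right_eq_zero.mp this
  exact ⟨u, v * (↑w⁻¹ : A), by rw [← mul_assoc, huvw], (sub_eq_zero.mp hp).symm⟩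

/-- Patching over a fibre square `A = C₀ ×_{C₁} D` in which `D → C₁` has a section `σ`: the two
equivalences differ over `C₁` by an automorphism of the idempotent `q`, which `σ` lifts to `D`. -/
lemma patch {A C₀ D C₁ : Type*} [Ring A] [Ring C₀] [Ring D] [Ring C₁]
    (α : A →+* C₀) (β : A →+* D) (γ₀ : C₀ →+* C₁) (γ₁ : D →+* C₁) (σ : C₁ →+* D)
    (hγ : ∀ a, γ₀ (α a) = γ₁ (β a)) (hσ : ∀ c, γ₁ (σ c) = c)
    (hinj : ∀ a b, α a = α b → β a = β b → a = b)
    (hlift : ∀ c d, γ₀ c = γ₁ d → ∃ a, α a = c ∧ β a = d)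
    {e q : A} (he : e * e = e) (hq : q * q = q) (hσq : σ (γ₁ (β q)) = β q)
    (h₀ : IdemEquiv (α e) (α q)) (h₁ : IdemEquiv (β e) (β q)) : IdemEquiv e q := by
  obtain ⟨u, v, a1, a2, a3, a4, a5, a6⟩ :=
    h₀.normalize (by rw [← map_mul, he]) (by rw [← map_mul, hq])
  obtain ⟨x, y, b1, b2, b3, b4, b5, b6⟩ :=
    h₁.normalize (by rw [← map_mul, he]) (by rw [← map_mul, hq])
  obtain ⟨t, ht⟩ : ∃ t, t = γ₁ y * γ₀ u := ⟨_, rfl⟩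
  obtain ⟨s, hs⟩ : ∃ s, s = γ₀ v * γ₁ x := ⟨_, rfl⟩
  have hts : t * s = γ₁ (β q) := by
    calc t * s = γ₁ y * γ₀ (u * v) * γ₁ x := by rw [ht, hs, map_mul]; simp only [mul_assoc]
      _ = γ₁ (y * β e * x) := by rw [a1, hγ, map_mul, map_mul]
      _ = γ₁ (β q) := by rw [b6, b2]
  have hst : s * γ₁ (β q) * t = γ₁ (β q) := by
    calc s * γ₁ (β q) * t = γ₀ v * γ₁ (x * β q * y) * γ₀ u := by
          rw [ht, hs, map_mul, map_mul]; simp only [mul_assoc]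
      _ = γ₀ (v * α e * u) := by rw [b4, b1, ← hγ, map_mul, map_mul]
      _ = γ₁ (β q) := by rw [a6, a2, hγ]
  obtain ⟨U, hU0, hU1⟩ := hlift u (x * σ t) (by
    rw [map_mul, hσ, ht, ← mul_assoc, ← map_mul, b1, ← hγ, ← map_mul, a3])
  obtain ⟨V, hV0, hV1⟩ := hlift v (σ s * y) (by
    rw [map_mul, hσ, hs, mul_assoc, ← map_mul, b1, ← hγ, ← map_mul, a6])
  refine ⟨U, V, hinj _ _ ?_ ?_, hinj _ _ ?_ ?_⟩
  · rw [map_mul, hU0, hV0, a1]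
  · calc β (U * V) = x * σ (t * s) * y := by
          rw [map_mul, hU1, hV1, map_mul]; simp only [mul_assoc]
      _ = β e := by rw [hts, hσq, b4, b1]
  · rw [map_mul, hU0, hV0, a2]
  · calc β (V * U) = σ s * (y * x) * σ t := by
          rw [map_mul, hU1, hV1]; simp only [mul_assoc]
      _ = σ (s * γ₁ (β q) * t) := by rw [b2, map_mul, map_mul, hσq]
      _ = β q := by rw [hst, hσq]

end IdemEquiv

/-! ### Algebras over which all idempotent matrices are extended -/

/-- Every idempotent matrix over the `R`-algebra `A` is equivalent to an idempotent matrix with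
entries in `R`: the matrix form of the condition that every finitely generated projective
`A`-module is extended from `R`. -/
def IdemExtended (R A : Type*) [CommRing R] [CommRing A] [Algebra R A] : Prop :=
  ∀ (N : ℕ) (e : Matrix (Fin N) (Fin N) A), e * e = e →
    ∃ q : Matrix (Fin N) (Fin N) R, q * q = q ∧ IdemEquiv e ((algebraMap R A).mapMatrix q)

namespace IdemExtended

lemma mapMatrix_algebraMap {R A B : Type*} [CommRing R] [CommRing A] [CommRing B] [Algebra R A]
    [Algebra R B] (φ : A →ₐ[R] B) {N : ℕ} (q : Matrix (Fin N) (Fin N) R) :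
    (φ : A →+* B).mapMatrix ((algebraMap R A).mapMatrix q) = (algebraMap R B).mapMatrix q := by
  ext i j; simp

lemma of_retract {R A B : Type*} [CommRing R] [CommRing A] [CommRing B] [Algebra R A]
    [Algebra R B] (i : A →ₐ[R] B) (r : B →ₐ[R] A) (hri : ∀ a, r (i a) = a)
    (h : IdemExtended R B) : IdemExtended R A := by
  intro N e he
  obtain ⟨q, hq, hqe⟩ := h N ((i : A →+* B).mapMatrix e) (by rw [← map_mul, he])
  refine ⟨q, hq, ?_⟩
  have := hqe.map (r : B →+* A).mapMatrix
  rw [mapMatrix_algebraMap] at this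
  have hre : (r : B →+* A).mapMatrix ((i : A →+* B).mapMatrix e) = e := by
    ext a b; simp [hri]
  rwa [hre] at this

lemma of_local {R A B : Type*} [CommRing R] [CommRing A] [CommRing B] [Algebra R A]
    [Algebra R B] (φ : A →ₐ[R] B) (hφ : Function.Surjective φ)
    (hloc : ∀ a, IsUnit (φ a) → IsUnit a) (h : IdemExtended R B) : IdemExtended R A := by
  intro N e he
  obtain ⟨q, hq, hqe⟩ := h N ((φ : A →+* B).mapMatrix e) (by rw [← map_mul, he])
  refine ⟨q, hq, ?_⟩
  have : IsLocalHom ((φ : A →+* B).mapMatrix : Matrix (Fin N) (Fin N) A →+* _) := by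
    refine ⟨fun a ha => ?_⟩
    rw [Matrix.isUnit_iff_isUnit_det] at ha ⊢
    rw [← RingHom.map_det] at ha
    exact hloc _ ha
  refine IdemEquiv.of_local (φ : A →+* B).mapMatrix (fun b => ?_) he
    (by rw [← map_mul, hq]) (by rwa [mapMatrix_algebraMap])
  choose a ha using fun i j => hφ (b i j)
  exact ⟨Matrix.of a, by ext i j; simp [ha]⟩

lemma patch {R A C₀ D C₁ : Type*} [CommRing R] [CommRing A] [CommRing C₀] [CommRing D]
    [CommRing C₁] [Algebra R A] [Algebra R C₀] [Algebra R D] [Algebra R C₁]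
    (α : A →ₐ[R] C₀) (β : A →ₐ[R] D) (γ₀ : C₀ →ₐ[R] C₁) (γ₁ : D →ₐ[R] C₁) (σ : C₁ →ₐ[R] D)
    (ε : C₁ →ₐ[R] R)
    (hγ : ∀ a, γ₀ (α a) = γ₁ (β a)) (hσ : ∀ c, γ₁ (σ c) = c)
    (hinj : ∀ a b, α a = α b → β a = β b → a = b)
    (hlift : ∀ c d, γ₀ c = γ₁ d → ∃ a, α a = c ∧ β a = d)
    (h₀ : IdemExtended R C₀) (h₁ : IdemExtended R D) : IdemExtended R A := by
  intro N e he
  obtain ⟨q, hq, hqe⟩ := h₀ N ((α : A →+* C₀).mapMatrix e) (by rw [← map_mul, he])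
  obtain ⟨q', hq', hqe'⟩ := h₁ N ((β : A →+* D).mapMatrix e) (by rw [← map_mul, he])
  refine ⟨q, hq, ?_⟩
  -- over `C₁` both `q` and `q'` are equivalent to the image of `e`, so they agree over `R`
  have hqq' : IdemEquiv q' q := by
    have k₀ := hqe.map (γ₀ : C₀ →+* C₁).mapMatrix
    have k₁ := hqe'.map (γ₁ : D →+* C₁).mapMatrix
    rw [mapMatrix_algebraMap] at k₀ k₁
    have hee : (γ₀ : C₀ →+* C₁).mapMatrix ((α : A →+* C₀).mapMatrix e) =
        (γ₁ : D →+* C₁).mapMatrix ((β : A →+* D).mapMatrix e) := by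
      ext i j; simp [hγ]
    rw [hee] at k₀
    have k := k₁.symm.trans (by rw [← map_mul, hq']) (by simp only [← map_mul, he])
      (by rw [← map_mul, hq]) k₀
    have := k.map (ε : C₁ →+* R).mapMatrix
    rw [mapMatrix_algebraMap, mapMatrix_algebraMap] at this
    simpa using this
  refine IdemEquiv.patch (α : A →+* C₀).mapMatrix (β : A →+* D).mapMatrix
    (γ₀ : C₀ →+* C₁).mapMatrix (γ₁ : D →+* C₁).mapMatrix (σ : C₁ →+* D).mapMatrix
    ?_ ?_ ?_ ?_ he (by rw [← map_mul, hq]) ?_ ?_ ?_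
  · intro a; ext i j; simp [hγ]
  · intro a; ext i j; simp [hσ]
  · intro a b h h'
    ext i j
    exact hinj _ _ (congrFun (congrFun h i) j) (congrFun (congrFun h' i) j)
  · intro c d h
    choose a ha ha' using fun i j => hlift (c i j) (d i j) (congrFun (congrFun h i) j)
    exact ⟨Matrix.of a, by ext i j; simp [ha], by ext i j; simp [ha']⟩
  · simp only [mapMatrix_algebraMap]
  · rwa [mapMatrix_algebraMap]
  · rw [mapMatrix_algebraMap]
    exact hqe'.trans (by simp only [← map_mul, he]) (by rw [← map_mul, hq'])
      (by rw [← map_mul, hq]) (hqq'.map (algebraMap R D).mapMatrix)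

end IdemExtended

/-! ### Passage between modules and idempotent matrices -/

/-- A presentation of `A ⊗[R] Q` as a direct summand of `A ^ N` specializes, along an augmentation
`ε : A → R`, to a presentation of `Q` as a direct summand of `R ^ N`. -/
lemma exists_specialize {R A Q : Type*} [CommRing R] [CommRing A] [Algebra R A] [AddCommGroup Q]
    [Module R Q] (ε : A →ₐ[R] R) {N : ℕ} (u : (Fin N → A) →ₗ[A] A ⊗[R] Q)
    (v : A ⊗[R] Q →ₗ[A] (Fin N → A)) (huv : u ∘ₗ v = LinearMap.id) :
    ∃ (u₀ : (Fin N → R) →ₗ[R] Q) (v₀ : Q →ₗ[R] (Fin N → R)), u₀ ∘ₗ v₀ = LinearMap.id := by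
  let π : A ⊗[R] Q →ₗ[R] Q := (TensorProduct.lid R Q).toLinearMap ∘ₗ ε.toLinearMap.rTensor Q
  let κ : (Fin N → A) →ₗ[R] (Fin N → R) := ε.toLinearMap.compLeft (Fin N)
  let ι : (Fin N → R) →ₗ[R] (Fin N → A) := (Algebra.linearMap R A).compLeft (Fin N)
  have hπ : ∀ (a : A) (z : A ⊗[R] Q), π (a • z) = ε a • π z := by
    intro a z
    induction z with
    | zero => simp
    | tmul b q => simp [π, TensorProduct.smul_tmul', mul_smul]
    | add x y hx hy => rw [smul_add, map_add, hx, hy, map_add, smul_add]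
  -- `π ∘ u` depends only on the specialization of its argument
  have hu : ∀ x, π (u (ι (κ x))) = π (u x) := by
    intro x
    have key : ∀ y : Fin N → A, π (u y) = ∑ i, ε (y i) • π (u (Pi.single i 1)) := by
      intro y
      conv_lhs => rw [pi_eq_sum_univ' y]
      simp only [map_sum, map_smul, hπ]
    rw [key, key]
    simp [ι, κ]
  refine ⟨π ∘ₗ u.restrictScalars R ∘ₗ ι,
    κ ∘ₗ v.restrictScalars R ∘ₗ TensorProduct.mk R A Q 1, ?_⟩
  ext q
  have h := LinearMap.congr_fun huv ((1 : A) ⊗ₜ[R] q)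
  simp only [LinearMap.comp_apply, LinearMap.id_apply] at h
  change π (u (ι (κ (v (1 ⊗ₜ[R] q))))) = q
  rw [hu, h]
  simp [π]

/-- Base change of a presentation of `Q` as a direct summand of `R ^ N`. -/
lemma exists_baseChange {R Q : Type*} (A : Type*) [CommRing R] [CommRing A] [Algebra R A]
    [AddCommGroup Q] [Module R Q] {N : ℕ} (u₀ : (Fin N → R) →ₗ[R] Q) (v₀ : Q →ₗ[R] (Fin N → R))
    (h : u₀ ∘ₗ v₀ = LinearMap.id) :
    ∃ (u : (Fin N → A) →ₗ[A] A ⊗[R] Q) (v : A ⊗[R] Q →ₗ[A] (Fin N → A)),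
      u ∘ₗ v = LinearMap.id ∧ LinearMap.toMatrix' (v ∘ₗ u) =
        (algebraMap R A).mapMatrix (LinearMap.toMatrix' (v₀ ∘ₗ u₀)) := by
  let φ := TensorProduct.piScalarRight R A A (Fin N)
  refine ⟨u₀.baseChange A ∘ₗ φ.symm.toLinearMap, φ.toLinearMap ∘ₗ v₀.baseChange A, ?_, ?_⟩
  · have : u₀.baseChange A ∘ₗ v₀.baseChange A = LinearMap.id := by
      rw [← LinearMap.baseChange_comp, h, LinearMap.baseChange_id]
    ext q
    simpa using LinearMap.congr_fun this ((1 : A) ⊗ₜ[R] q)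
  · ext i j
    simp [φ, LinearMap.toMatrix'_apply, TensorProduct.piScalarRight_symm_single,
      TensorProduct.piScalarRight_apply, TensorProduct.piScalarRightHom_tmul,
      Algebra.algebraMap_eq_smul_one]

lemma idemEquiv_of_summand {A P : Type*} [CommRing A] [AddCommGroup P] [Module A P] {N : ℕ}
    (u u' : (Fin N → A) →ₗ[A] P) (v v' : P →ₗ[A] (Fin N → A)) (h : u ∘ₗ v = LinearMap.id)
    (h' : u' ∘ₗ v' = LinearMap.id) :
    IdemEquiv (LinearMap.toMatrix' (v ∘ₗ u)) (LinearMap.toMatrix' (v' ∘ₗ u')) := by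
  refine ⟨LinearMap.toMatrix' (v ∘ₗ u'), LinearMap.toMatrix' (v' ∘ₗ u), ?_, ?_⟩
  · rw [← LinearMap.toMatrix'_comp, LinearMap.comp_assoc, ← LinearMap.comp_assoc u, h',
      LinearMap.id_comp]
  · rw [← LinearMap.toMatrix'_comp, LinearMap.comp_assoc, ← LinearMap.comp_assoc u', h,
      LinearMap.id_comp]

lemma toMatrix'_idem {A P : Type*} [CommRing A] [AddCommGroup P] [Module A P] {N : ℕ}
    (u : (Fin N → A) →ₗ[A] P) (v : P →ₗ[A] (Fin N → A)) (h : u ∘ₗ v = LinearMap.id) :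
    LinearMap.toMatrix' (v ∘ₗ u) * LinearMap.toMatrix' (v ∘ₗ u) = LinearMap.toMatrix' (v ∘ₗ u) := by
  rw [← LinearMap.toMatrix'_comp, LinearMap.comp_assoc, ← LinearMap.comp_assoc u, h,
      LinearMap.id_comp]

/-- An idempotent matrix presents its image as a direct summand of the free module. -/
lemma exists_summand {A : Type*} [CommRing A] {N : ℕ} (e : Matrix (Fin N) (Fin N) A)
    (he : e * e = e) :
    ∃ (u : (Fin N → A) →ₗ[A] LinearMap.range (Matrix.toLin' e))
      (v : LinearMap.range (Matrix.toLin' e) →ₗ[A] (Fin N → A)),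
      u ∘ₗ v = LinearMap.id ∧ LinearMap.toMatrix' (v ∘ₗ u) = e := by
  refine ⟨(Matrix.toLin' e).rangeRestrict, (LinearMap.range (Matrix.toLin' e)).subtype, ?_, ?_⟩
  · ext ⟨x, y, rfl⟩ : 2
    simp [Matrix.mulVec_mulVec, he]
  · rw [LinearMap.subtype_comp_codRestrict, LinearMap.toMatrix'_toLin']

lemma idemExtended_of_modules {R A : Type u} [CommRing R] [CommRing A] [Algebra R A]
    (ε : A →ₐ[R] R)
    (h : ∀ (P : Type u) [AddCommGroup P] [Module A P], Module.Finite A P → Module.Projective A P →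
      ∃ Q : ModuleCat.{u} R, Nonempty (P ≃ₗ[A] A ⊗[R] Q)) : IdemExtended R A := by
  intro N e he
  obtain ⟨u, v, huv, hue⟩ := exists_summand e he
  obtain ⟨Q, ⟨φ⟩⟩ := h _ (Module.Finite.of_surjective u fun x => ⟨v x, LinearMap.congr_fun huv x⟩)
    (Module.Projective.of_split v u huv)
  have huv' : (φ.toLinearMap ∘ₗ u) ∘ₗ (v ∘ₗ φ.symm.toLinearMap) = LinearMap.id := by
    refine LinearMap.ext fun x => ?_
    have := LinearMap.congr_fun huv (φ.symm x)
    simp only [LinearMap.comp_apply, LinearMap.id_apply] at this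
    simp [this]
  obtain ⟨u₀, v₀, h₀⟩ := exists_specialize ε _ _ huv'
  obtain ⟨u₁, v₁, h₁, h₁'⟩ := exists_baseChange A u₀ v₀ h₀
  refine ⟨_, toMatrix'_idem u₀ v₀ h₀, ?_⟩
  rw [← h₁', ← hue]
  convert idemEquiv_of_summand _ _ _ _ huv' h₁ using 2
  refine LinearMap.ext fun x => ?_
  simp

lemma modules_of_idemExtended {R A : Type u} [CommRing R] [CommRing A] [Algebra R A]
    (h : IdemExtended R A) (P : Type u) [AddCommGroup P] [Module A P] (hf : Module.Finite A P)
    (hp : Module.Projective A P) : ∃ Q : ModuleCat.{u} R, Nonempty (P ≃ₗ[A] A ⊗[R] Q) := by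
  obtain ⟨N, u, v, -, -, huv⟩ := Module.Finite.exists_comp_eq_id_of_projective A P
  obtain ⟨q, hq, hqe⟩ := h N _ (toMatrix'_idem u v huv)
  obtain ⟨u₀, v₀, h₀, hq'⟩ := exists_summand q hq
  obtain ⟨u₁, v₁, h₁, h₁'⟩ := exists_baseChange A u₀ v₀ h₀
  rw [hq'] at h₁'
  rw [← h₁'] at hqe
  obtain ⟨x, y, hxy, hyx⟩ := hqe
  have hxy' : Matrix.toLin' x ∘ₗ Matrix.toLin' y = v ∘ₗ u := by
    rw [← Matrix.toLin'_mul, hxy, Matrix.toLin'_toMatrix']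
  have hyx' : Matrix.toLin' y ∘ₗ Matrix.toLin' x = v₁ ∘ₗ u₁ := by
    rw [← Matrix.toLin'_mul, hyx, Matrix.toLin'_toMatrix']
  refine ⟨ModuleCat.of R (LinearMap.range (Matrix.toLin' q)),
    ⟨LinearEquiv.ofLinearMap (u₁ ∘ₗ Matrix.toLin' y ∘ₗ v) (u ∘ₗ Matrix.toLin' x ∘ₗ v₁) ?_ ?_⟩⟩
  · calc (u₁ ∘ₗ Matrix.toLin' y ∘ₗ v) ∘ₗ (u ∘ₗ Matrix.toLin' x ∘ₗ v₁)
        = u₁ ∘ₗ Matrix.toLin' y ∘ₗ (v ∘ₗ u) ∘ₗ Matrix.toLin' x ∘ₗ v₁ := rfl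
      _ = u₁ ∘ₗ (Matrix.toLin' y ∘ₗ Matrix.toLin' x) ∘ₗ
            (Matrix.toLin' y ∘ₗ Matrix.toLin' x) ∘ₗ v₁ := by rw [← hxy']; rfl
      _ = (u₁ ∘ₗ v₁) ∘ₗ (u₁ ∘ₗ v₁) ∘ₗ (u₁ ∘ₗ v₁) := by rw [hyx']; rfl
      _ = LinearMap.id := by rw [h₁]; rfl
  · calc (u ∘ₗ Matrix.toLin' x ∘ₗ v₁) ∘ₗ (u₁ ∘ₗ Matrix.toLin' y ∘ₗ v)
        = u ∘ₗ Matrix.toLin' x ∘ₗ (v₁ ∘ₗ u₁) ∘ₗ Matrix.toLin' y ∘ₗ v := rfl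
      _ = u ∘ₗ (Matrix.toLin' x ∘ₗ Matrix.toLin' y) ∘ₗ
            (Matrix.toLin' x ∘ₗ Matrix.toLin' y) ∘ₗ v := by rw [← hyx']; rfl
      _ = (u ∘ₗ v) ∘ₗ (u ∘ₗ v) ∘ₗ (u ∘ₗ v) := by rw [hxy']; rfl
      _ = LinearMap.id := by rw [huv]; rfl

/-! ### Monomial ideals -/

/-- The ideal generated by the monomials `x^d` with `d ∈ S`. -/
noncomputable abbrev monIdeal (R : Type*) [CommRing R] {n : ℕ} (S : Set (Fin n →₀ ℕ)) :
    Ideal (MvPolynomial (Fin n) R) :=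
  Ideal.span ((fun d => (monomial d (1 : R) : MvPolynomial (Fin n) R)) '' S)

/-- The substitution `x_i ↦ 0` for `i ∈ T`, fixing the other variables. -/
noncomputable def kill (R : Type*) [CommRing R] {n : ℕ} (T : Set (Fin n)) :
    MvPolynomial (Fin n) R →ₐ[R] MvPolynomial (Fin n) R :=
  open Classical in aeval fun i => if i ∈ T then 0 else X i

section MonomialIdeals

variable {R : Type u} [CommRing R] {n : ℕ}

lemma kill_monomial_of_disjoint {T : Set (Fin n)} {d : Fin n →₀ ℕ} (h : ∀ i ∈ T, d i = 0) :
    kill R T (monomial d 1) = monomial d 1 := by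
  classical
  rw [kill, aeval_monomial, map_one, one_mul, monomial_eq, map_one, one_mul]
  refine Finsupp.prod_congr fun i hi => ?_
  rw [if_neg fun hT => Finsupp.mem_support_iff.mp hi (h i hT)]

lemma kill_monomial_of_mem {T : Set (Fin n)} {d : Fin n →₀ ℕ} {i : Fin n} (hi : i ∈ T)
    (hd : d i ≠ 0) : kill R T (monomial d 1) = 0 := by
  classical
  rw [kill, aeval_monomial, map_one, one_mul, Finsupp.prod]
  refine Finset.prod_eq_zero (Finsupp.mem_support_iff.mpr hd) ?_
  rw [if_pos hi, zero_pow hd]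

/-- Modulo an ideal containing the variables in `T`, killing those variables changes nothing. -/
lemma mk_kill {T : Set (Fin n)} (J : Ideal (MvPolynomial (Fin n) R))
    (hJ : ∀ i ∈ T, (X i : MvPolynomial (Fin n) R) ∈ J) (p : MvPolynomial (Fin n) R) :
    Ideal.Quotient.mk J (kill R T p) = Ideal.Quotient.mk J p := by
  classical
  have : (Ideal.Quotient.mkₐ R J).comp (kill R T) = Ideal.Quotient.mkₐ R J := by
    refine MvPolynomial.algHom_ext fun i => ?_
    rw [AlgHom.comp_apply, kill, aeval_X]
    split_ifs with h
    · rw [map_zero]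
      exact (Ideal.Quotient.eq_zero_iff_mem.mpr (hJ i h)).symm
    · rfl
  exact DFunLike.congr_fun this p

lemma monomial_mem_monIdeal {S : Set (Fin n →₀ ℕ)} {d : Fin n →₀ ℕ} (hd : d ∈ S) :
    (monomial d (1 : R) : MvPolynomial (Fin n) R) ∈ monIdeal R S :=
  Ideal.subset_span ⟨d, hd, rfl⟩

lemma monIdeal_le {S : Set (Fin n →₀ ℕ)} {J : Ideal (MvPolynomial (Fin n) R)}
    (h : ∀ d ∈ S, (monomial d (1 : R) : MvPolynomial (Fin n) R) ∈ J) : monIdeal R S ≤ J := by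
  refine Ideal.span_le.mpr ?_
  rintro _ ⟨d, hd, rfl⟩
  exact h d hd

/-- A quotient by variables is a retract of the polynomial ring. -/
lemma idemExtended_of_variables (hpoly : IdemExtended R (MvPolynomial (Fin n) R))
    (S : Set (Fin n →₀ ℕ)) (hS : ∀ d ∈ S, ∃ i, d = Finsupp.single i 1) :
    IdemExtended R (MvPolynomial (Fin n) R ⧸ monIdeal R S) := by
  let T : Set (Fin n) := {i | Finsupp.single i 1 ∈ S}
  have hT : ∀ a ∈ monIdeal R S, kill R T a = 0 := by
    intro a ha
    refine (monIdeal_le (J := RingHom.ker (kill R T)) ?_ ha)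
    intro d hd
    obtain ⟨i, rfl⟩ := hS d hd
    exact kill_monomial_of_mem (i := i) hd (by simp)
  refine hpoly.of_retract (Ideal.Quotient.liftₐ _ (kill R T) hT) (Ideal.Quotient.mkₐ R _) ?_
  intro a
  obtain ⟨p, rfl⟩ := Ideal.Quotient.mk_surjective a
  exact mk_kill _ (fun i hi => monomial_mem_monIdeal hi) p

/-- Patching for quotients by `I = J₀ ∩ J₁`. The endomorphism `ρ` induces the section
`A / (J₀ + J₁) → A / J₁`, and `ε` an augmentation of `A / (J₀ + J₁)`. -/
lemma idemExtended_of_inf {A : Type*} [CommRing A] [Algebra R A] (I J₀ J₁ : Ideal A)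
    (hI : I = J₀ ⊓ J₁) (ρ : A →ₐ[R] A) (hρ₀ : ∀ a ∈ J₀, ρ a ∈ J₁) (hρ₁ : ∀ a ∈ J₁, ρ a ∈ J₁)
    (hρ : ∀ a, ρ a - a ∈ J₀) (ε : A →ₐ[R] R) (hε₀ : ∀ a ∈ J₀, ε a = 0) (hε₁ : ∀ a ∈ J₁, ε a = 0)
    (h₀ : IdemExtended R (A ⧸ J₀)) (h₁ : IdemExtended R (A ⧸ J₁)) :
    IdemExtended R (A ⧸ I) := by
  have hρ' : ∀ a ∈ J₀ ⊔ J₁, (Ideal.Quotient.mkₐ R J₁).comp ρ a = 0 := fun a ha =>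
    (sup_le (fun b hb => Ideal.Quotient.eq_zero_iff_mem.mpr (hρ₀ b hb))
      (fun b hb => Ideal.Quotient.eq_zero_iff_mem.mpr (hρ₁ b hb)) :
      J₀ ⊔ J₁ ≤ RingHom.ker ((Ideal.Quotient.mkₐ R J₁).comp ρ)) ha
  have hε' : ∀ a ∈ J₀ ⊔ J₁, ε a = 0 := fun a ha =>
    (sup_le hε₀ hε₁ : J₀ ⊔ J₁ ≤ RingHom.ker ε) ha
  refine IdemExtended.patch (C₁ := A ⧸ (J₀ ⊔ J₁))
    (Ideal.Quotient.factorₐ R (hI.trans_le inf_le_left))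
    (Ideal.Quotient.factorₐ R (hI.trans_le inf_le_right))
    (Ideal.Quotient.factorₐ R le_sup_left) (Ideal.Quotient.factorₐ R le_sup_right)
    (Ideal.Quotient.liftₐ _ _ hρ') (Ideal.Quotient.liftₐ _ ε hε') ?_ ?_ ?_ ?_ h₀ h₁
  · intro a
    obtain ⟨a, rfl⟩ := Ideal.Quotient.mk_surjective a
    rfl
  · intro a
    obtain ⟨a, rfl⟩ := Ideal.Quotient.mk_surjective a
    exact Ideal.Quotient.eq.mpr (Ideal.mem_sup_left (hρ a))
  · intro a b hab hab'
    obtain ⟨a, rfl⟩ := Ideal.Quotient.mk_surjective a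
    obtain ⟨b, rfl⟩ := Ideal.Quotient.mk_surjective b
    rw [Ideal.Quotient.eq, hI]
    exact ⟨Ideal.Quotient.eq.mp hab, Ideal.Quotient.eq.mp hab'⟩
  · intro c d hcd
    obtain ⟨c, rfl⟩ := Ideal.Quotient.mk_surjective c
    obtain ⟨d, rfl⟩ := Ideal.Quotient.mk_surjective d
    obtain ⟨y, hy, z, hz, hyz⟩ := Submodule.mem_sup.mp (Ideal.Quotient.eq.mp hcd)
    refine ⟨Ideal.Quotient.mk I (c - y), Ideal.Quotient.eq.mpr ?_, Ideal.Quotient.eq.mpr ?_⟩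
    · rw [show c - y - c = -y by ring]
      exact neg_mem hy
    · rw [show c - y - d = z by linear_combination -hyz]
      exact hz

/-- The case of squarefree monomials. The induction runs over a set `V` of variables such that each
generator either involves only variables of `V` or is itself a variable outside `V`. -/
lemma idemExtended_squarefree (hpoly : IdemExtended R (MvPolynomial (Fin n) R))
    (V : Finset (Fin n)) : ∀ S : Set (Fin n →₀ ℕ), (∀ d ∈ S, d ≠ 0) → (∀ d ∈ S, ∀ i, d i ≤ 1) →
      (∀ d ∈ S, (∀ i ∉ V, d i = 0) ∨ ∃ i ∉ V, d = Finsupp.single i 1) →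
      IdemExtended R (MvPolynomial (Fin n) R ⧸ monIdeal R S) := by
  classical
  induction V using Finset.induction with
  | empty =>
    intro S h0 _ hV
    refine idemExtended_of_variables hpoly S fun d hd => ?_
    rcases hV d hd with h | ⟨i, -, h⟩
    · exact absurd (Finsupp.ext fun i => h i (by simp)) (h0 d hd)
    · exact ⟨i, h⟩
  | insert k V hk ih =>
    intro S h0 h1 hV
    -- generators of `I + (x_k)` and of the colon ideal `(I : x_k)`
    let S₀ : Set (Fin n →₀ ℕ) := {d | d ∈ S ∧ d k = 0} ∪ {Finsupp.single k 1}
    let S₁ : Set (Fin n →₀ ℕ) := Finsupp.erase k '' S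
    have hS₀0 : ∀ d ∈ S₀, d ≠ 0 := by
      rintro d (⟨hd, -⟩ | rfl)
      · exact h0 d hd
      · simp
    have hXk : (X k : MvPolynomial (Fin n) R) ∈ monIdeal R S₀ :=
      monomial_mem_monIdeal (Or.inr rfl)
    have hext₀ : IdemExtended R (MvPolynomial (Fin n) R ⧸ monIdeal R S₀) := by
      refine ih S₀ hS₀0 ?_ ?_
      · rintro d (⟨hd, -⟩ | rfl) i
        · exact h1 d hd i
        · rw [Finsupp.single_apply]; split_ifs <;> simp
      · rintro d (⟨hd, hdk⟩ | rfl)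
        · rcases hV d hd with h | ⟨i, hi, h⟩
          · left
            intro i hi
            by_cases hik : i = k
            · rwa [hik]
            · exact h i (by simp [hik, hi])
          · exact Or.inr ⟨i, fun h' => hi (Finset.mem_insert_of_mem h'), h⟩
        · exact Or.inr ⟨k, hk, rfl⟩
    by_cases hkS : Finsupp.single k 1 ∈ S
    · -- here `x_k ∈ I`, so `I` is generated by `S₀`
      have : monIdeal R S = monIdeal R S₀ := by
        refine le_antisymm (monIdeal_le fun d hd => ?_) (monIdeal_le ?_)
        · by_cases hdk : d k = 0
          · exact monomial_mem_monIdeal (Or.inl ⟨hd, hdk⟩)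
          · refine mem_ideal_span_monomial_image.mpr fun x hx => ⟨_, Or.inr rfl, ?_⟩
            rw [Finset.mem_singleton.mp (support_monomial_subset hx)]
            simpa using Nat.one_le_iff_ne_zero.mpr hdk
        · rintro d (⟨hd, -⟩ | rfl)
          · exact monomial_mem_monIdeal hd
          · exact monomial_mem_monIdeal hkS
      rw [this]
      exact hext₀
    have hS₁0 : ∀ d ∈ S₁, d ≠ 0 := by
      rintro _ ⟨d, hd, rfl⟩ h
      have hd' : d = Finsupp.single k (d k) := by
        rw [← Finsupp.single_add_erase k d, h]; simp
      have hdk : d k = 1 := by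
        refine le_antisymm (h1 d hd k) (Nat.one_le_iff_ne_zero.mpr fun h' => h0 d hd ?_)
        rw [hd', h', Finsupp.single_zero]
      rw [hdk] at hd'
      exact hkS (hd' ▸ hd)
    have hext₁ : IdemExtended R (MvPolynomial (Fin n) R ⧸ monIdeal R S₁) := by
      refine ih S₁ hS₁0 ?_ ?_
      · rintro _ ⟨d, hd, rfl⟩ i
        rw [Finsupp.erase_apply]
        split_ifs
        · simp
        · exact h1 d hd i
      · rintro _ ⟨d, hd, rfl⟩
        rcases hV d hd with h | ⟨i, hi, rfl⟩
        · left
          intro i hi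
          rw [Finsupp.erase_apply]
          split_ifs with hik
          · rfl
          · exact h i (by simp [hik, hi])
        · rw [Finset.mem_insert, not_or] at hi
          exact Or.inr ⟨i, hi.2, Finsupp.erase_single_ne (Ne.symm hi.1)⟩
    have hinf : monIdeal R S = monIdeal R S₀ ⊓ monIdeal R S₁ := by
      ext f
      rw [Ideal.mem_inf]
      simp only [monIdeal, mem_ideal_span_monomial_image]
      constructor
      · intro h
        refine ⟨fun x hx => ?_, fun x hx => ?_⟩
        · obtain ⟨d, hd, hdx⟩ := h x hx
          by_cases hdk : d k = 0
          · exact ⟨d, Or.inl ⟨hd, hdk⟩, hdx⟩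
          · refine ⟨_, Or.inr rfl, le_trans ?_ hdx⟩
            simpa using Nat.one_le_iff_ne_zero.mpr hdk
        · obtain ⟨d, hd, hdx⟩ := h x hx
          refine ⟨_, ⟨d, hd, rfl⟩, le_trans (fun i => ?_) hdx⟩
          rw [Finsupp.erase_apply]
          split_ifs <;> simp
      · rintro ⟨hf₀, hf₁⟩ x hx
        obtain ⟨d, ⟨hd, hdk⟩ | rfl, hdx⟩ := hf₀ x hx
        · exact ⟨d, hd, hdx⟩
        · obtain ⟨_, ⟨d', hd', rfl⟩, hdx'⟩ := hf₁ x hx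
          refine ⟨d', hd', fun i => ?_⟩
          by_cases hik : i = k
          · subst hik
            exact (h1 d' hd' i).trans (by simpa using hdx i)
          · simpa [Finsupp.erase_apply, hik] using hdx' i
    have hkill₁ : ∀ d ∈ S₁, kill R {k} (monomial d 1) = monomial d 1 := by
      rintro _ ⟨d, hd, rfl⟩
      refine kill_monomial_of_disjoint ?_
      rintro i rfl
      simp
    refine idemExtended_of_inf _ _ _ hinf (kill R {k}) ?_ ?_ ?_ (aeval fun _ => 0) ?_ ?_ hext₀ hext₁
    · intro a ha
      refine monIdeal_le (J := (monIdeal R S₁).comap (kill R {k})) ?_ ha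
      rintro d (⟨hd, hdk⟩ | rfl) <;> rw [Ideal.mem_comap]
      · have hde : Finsupp.erase k d = d := Finsupp.erase_of_notMem_support (by simpa using hdk)
        have hdS : d ∈ S₁ := ⟨d, hd, hde⟩
        rw [hkill₁ d hdS]
        exact monomial_mem_monIdeal hdS
      · rw [kill_monomial_of_mem (Set.mem_singleton k) (by simp)]
        exact zero_mem _
    · intro a ha
      refine monIdeal_le (J := (monIdeal R S₁).comap (kill R {k})) ?_ ha
      intro d hd
      rw [Ideal.mem_comap, hkill₁ d hd]
      exact monomial_mem_monIdeal hd
    · intro a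
      refine Ideal.Quotient.eq.mp (mk_kill _ ?_ a)
      rintro i rfl
      exact hXk
    · intro a ha
      exact monIdeal_le (J := RingHom.ker (aeval (R := R) fun _ : Fin n => (0 : R)))
        (fun d hd => aeval_zero_of_ne_zero (hS₀0 d hd)) ha
    · intro a ha
      exact monIdeal_le (J := RingHom.ker (aeval (R := R) fun _ : Fin n => (0 : R)))
        (fun d hd => aeval_zero_of_ne_zero (hS₁0 d hd)) ha

/-- A monomial ideal and the ideal generated by the squarefree parts of its generators have the
same radical, so the general case reduces to the squarefree one. -/
lemma idemExtended_monIdeal (hpoly : IdemExtended R (MvPolynomial (Fin n) R))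
    (S : Set (Fin n →₀ ℕ)) (hS : ∀ d ∈ S, d ≠ 0) :
    IdemExtended R (MvPolynomial (Fin n) R ⧸ monIdeal R S) := by
  let sf : (Fin n →₀ ℕ) → (Fin n →₀ ℕ) := Finsupp.mapRange (fun m => min m 1) (by simp)
  have hle : monIdeal R S ≤ monIdeal R (sf '' S) := by
    intro f hf
    rw [monIdeal, mem_ideal_span_monomial_image] at hf ⊢
    intro x hx
    obtain ⟨d, hd, hdx⟩ := hf x hx
    exact ⟨_, ⟨d, hd, rfl⟩, le_trans (fun i => by simp [sf]) hdx⟩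
  have hrad : monIdeal R (sf '' S) ≤ (monIdeal R S).radical := by
    refine monIdeal_le ?_
    rintro _ ⟨d, hd, rfl⟩
    refine ⟨∑ i, d i, ?_⟩
    rw [monomial_pow, one_pow]
    refine mem_ideal_span_monomial_image.mpr fun x hx => ⟨d, hd, ?_⟩
    rw [Finset.mem_singleton.mp (support_monomial_subset hx)]
    intro i
    have : d i ≤ ∑ i, d i := Finset.single_le_sum (fun _ _ => Nat.zero_le _) (Finset.mem_univ i)
    rcases Nat.eq_zero_or_pos (d i) with h | h
    · simp [h]
    · simpa [sf, Nat.min_eq_right h] using this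
  refine (idemExtended_squarefree hpoly Finset.univ (sf '' S) ?_ ?_ ?_).of_local
    (Ideal.Quotient.factorₐ R hle) (Ideal.Quotient.factor_surjective hle) ?_
  · rintro _ ⟨d, hd, rfl⟩ h
    refine hS d hd (Finsupp.ext fun i => ?_)
    have := DFunLike.congr_fun h i
    simp [sf] at this
    simpa using this
  · rintro _ ⟨d, hd, rfl⟩ i
    simp [sf]
  · exact fun d _ => Or.inl fun i hi => absurd (Finset.mem_univ i) hi
  · intro a ha
    obtain ⟨a, rfl⟩ := Ideal.Quotient.mk_surjective a
    obtain ⟨b, hb⟩ := ha.exists_right_inv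
    obtain ⟨b, rfl⟩ := Ideal.Quotient.mk_surjective b
    obtain ⟨m, hm⟩ := hrad (Ideal.Quotient.eq.mp hb : a * b - 1 ∈ _)
    have hnil : IsNilpotent (Ideal.Quotient.mk (monIdeal R S) (a * b - 1)) :=
      ⟨m, by rw [← map_pow]; exact Ideal.Quotient.eq_zero_iff_mem.mpr hm⟩
    have := hnil.isUnit_add_one
    rw [← map_one (Ideal.Quotient.mk (monIdeal R S)), ← map_add, sub_add_cancel, map_mul] at this
    exact isUnit_of_mul_isUnit_left this

end MonomialIdeals

/-- if for every `n ≥ 1` every finitely generated projective module over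
`R[x_1,…,x_n]` is extended from `R`, then for every discrete Hodge algebra `A` over `R` every
finitely generated projective `A`-module is extended from `R`. -/
theorem statement10 (R : Type u) [CommRing R]
    (hpoly : ∀ n : ℕ, 1 ≤ n →
      ∀ (P : Type u) [AddCommGroup P] [Module (MvPolynomial (Fin n) R) P],
      Module.Finite (MvPolynomial (Fin n) R) P → Module.Projective (MvPolynomial (Fin n) R) P →
      ∃ Q : ModuleCat.{u} R,
        Nonempty (P ≃ₗ[MvPolynomial (Fin n) R]
          TensorProduct R (MvPolynomial (Fin n) R) Q)) :
    ∀ (n : ℕ) (S : Finset (Fin n →₀ ℕ)), (∀ d ∈ S, d ≠ 0) →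
      ∀ (P : Type u) [AddCommGroup P] [Module (DiscreteHodgeAlgebra R n S) P],
      Module.Finite (DiscreteHodgeAlgebra R n S) P →
      Module.Projective (DiscreteHodgeAlgebra R n S) P →
      ∃ Q : ModuleCat.{u} R,
        Nonempty (P ≃ₗ[DiscreteHodgeAlgebra R n S]
          TensorProduct R (DiscreteHodgeAlgebra R n S) Q) := by
  intro n S hS P _ _ hf hp
  -- the hypothesis excludes `n = 0`, but `R` is a retract of `R[x_1]`
  have hext : IdemExtended R (MvPolynomial (Fin n) R) := by
    rcases Nat.eq_zero_or_pos n with rfl | hn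
    · refine (idemExtended_of_modules (aeval fun _ => 0) (hpoly 1 le_rfl)).of_retract
        (aeval Fin.elim0) (aeval fun _ => 0) fun a => ?_
      rw [← AlgHom.comp_apply, ← AlgHom.id_apply (R := R) a]
      congr 1
      exact MvPolynomial.algHom_ext fun i => i.elim0
    · exact idemExtended_of_modules (aeval fun _ => 0) (hpoly n hn)
  exact modules_of_idemExtended (idemExtended_monIdeal hext (S : Set (Fin n →₀ ℕ)) hS) P hf hp
end
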